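/- arXiv:2112.05836 — 2 statements merged into one kernel-verified Lean document; each statement's English description precedes it below -/
import Mathlib

section
/- Fix integers k ≥ 2, ℓ ≥ 1, and 1 ≤ m < n. Let X_1, …, X_{k−1} be lists of n strings each and let Y be a list of m strings, where every string occurring in these lists has length exactly ℓ and is over an alphabet Σ. Suppose there is an integer z such that for every choice of strings S_1 ∈ X_1, …, S_{k−1} ∈ X_{k−1}, S_y ∈ Y, the value LCS(S_1, …, S_{k−1}, S_y) is either z or z+1. Let $_1, …, $_k, %, @ be k+2 pairwise distinct symbols not in Σ, and set A = $_1^{2ℓ} · $_2^{2ℓ} ⋯ $_k^{2ℓ}, A_{−i} = A with the block $_i^{2ℓ} removed, B = %^{2ℓ}, f = n − m, and D = 2ℓ(2m + (k−1)n) + (z+1)m. Define AG_i(X_i) = A_{−i}^f · (A · X_i[1] · B) · (A · X_i[2] · B) ⋯ (A · X_i[n] · B) · A_{−i}^f for i ∈ [1..k−1], AG_y(Y) = A_{−k}^f · (A · Y[1] · B) ⋯ (A · Y[m] · B) · A_{−k}^f, and SAG_i(X_i) = @^{D−1} · AG_i(X_i), SAG_y(Y) = AG_y(Y) · @^{D−1}.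 Call a perfect alignment a choice of offsets Δ_1, …, Δ_{k−1} ∈ [0..n−m]; index j ∈ [1..m] is a good tuple of this alignment if LCS(X_1[Δ_1+j], …, X_{k−1}[Δ_{k−1}+j], Y[j]) = z+1. If some perfect alignment has all m of its indices good, then LCS(SAG_1(X_1), …, SAG_{k−1}(X_{k−1}), SAG_y(Y)) = D; and if every perfect alignment has fewer than m good indices, then LCS(SAG_1(X_1), …, SAG_{k−1}(X_{k−1}), SAG_y(Y)) = D − 1. -/
/-- The length of a longest common subsequence of a family of strings. -/
noncomputable def lcsLen {α : Type*} (L : List (List α)) : ℕ :=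
  sSup { m : ℕ | ∃ T : List α, T.length = m ∧ ∀ s ∈ L, T.Sublist s }

/-- `strPow W f` is the concatenation `W^f` of `f` copies of the string `W`. -/
def strPow {β : Type*} (W : List β) (f : ℕ) : List β :=
  (List.replicate f W).flatten

/-- The string `A = $₁^{2ℓ} · $₂^{2ℓ} ⋯ $_k^{2ℓ}`. -/
def gadgetA {β : Type*} (k ℓ : ℕ) (dollar : Fin k → β) : List β :=
  (List.ofFn fun j : Fin k => List.replicate (2 * ℓ) (dollar j)).flatten

/-- The string `A₋ᵢ`: `A` with the block `$ᵢ^{2ℓ}` removed. -/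
def gadgetAminus {β : Type*} (k ℓ : ℕ) (dollar : Fin k → β) (i : Fin k) : List β :=
  (List.ofFn fun j : Fin k =>
    if j = i then [] else List.replicate (2 * ℓ) (dollar j)).flatten

/-- The alignment gadget
`AG_i(X) = A₋ᵢ^f · (A · X[1] · B) · (A · X[2] · B) ⋯ (A · X[n] · B) · A₋ᵢ^f`
where `B = %^{2ℓ}`. -/
def gadgetAG {β : Type*} (k ℓ : ℕ) (dollar : Fin k → β) (percent : β)
    (i : Fin k) (f : ℕ) {n : ℕ} (X : Fin n → List β) : List β :=
  strPow (gadgetAminus k ℓ dollar i) f ++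
    (List.ofFn fun j : Fin n =>
      gadgetA k ℓ dollar ++ X j ++ List.replicate (2 * ℓ) percent).flatten ++
    strPow (gadgetAminus k ℓ dollar i) f

/-- The selected alignment gadget `SAG_i(X) = @^{D−1} · AG_i(X)`. -/
def gadgetSAGx {β : Type*} (k ℓ : ℕ) (dollar : Fin k → β) (percent atSym : β)
    (D : ℕ) (i : Fin k) (f : ℕ) {n : ℕ} (X : Fin n → List β) : List β :=
  List.replicate (D - 1) atSym ++ gadgetAG k ℓ dollar percent i f X

/-- The selected alignment gadget `SAG_y(Y) = AG_y(Y) · @^{D−1}`. -/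
def gadgetSAGy {β : Type*} (k ℓ : ℕ) (dollar : Fin k → β) (percent atSym : β)
    (D : ℕ) (i : Fin k) (f : ℕ) {m : ℕ} (Y : Fin m → List β) : List β :=
  gadgetAG k ℓ dollar percent i f Y ++ List.replicate (D - 1) atSym


open Classical in
/-- Position tags of a subsequence of an alignment gadget. -/
structure TagSpec {β : Type*} (Sig : Set β) {k : ℕ} (dollar : Fin k → β) (percent : β) (ℓ : ℕ)
    (i : Fin k) {n : ℕ} (X : Fin n → List β) (T : List β) (τ : Fin T.length → ℕ) : Prop where
  mono : Monotone τ
  sig : ∀ p, T.get p ∈ Sig ↔ ∃ a : Fin n, τ p = 3 * a + 2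
  pct : ∀ p, T.get p = percent ↔ ∃ a : Fin n, τ p = 3 * a + 3
  dol : ∀ p, T.get p = dollar i → ∃ a : Fin n, τ p = 3 * a + 1
  cntd : ∀ (a : Fin n) j,
    (Finset.univ.filter fun p => T.get p = dollar j ∧ τ p = 3 * a + 1).card ≤ 2 * ℓ
  cntp : ∀ (a : Fin n), (Finset.univ.filter fun p => τ p = 3 * a + 3).card ≤ 2 * ℓ
  sub : ∀ (a : Fin n),
    (((List.finRange T.length).filter fun p => decide (τ p = 3 * a + 2)).map T.get).Sublist (X a)
  all : ∀ p, T.get p ∈ Sig ∨ T.get p = percent ∨ ∃ j, T.get p = dollar j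

theorem flatten_ofFn_single {γ : Type*} {n : ℕ} (g : Fin n → List γ) (a : Fin n)
    (h : ∀ b, b ≠ a → g b = []) : (List.ofFn g).flatten = g a := by
  induction n with
  | zero => exact a.elim0
  | succ n ih =>
    rw [List.ofFn_succ, List.flatten_cons]
    refine Fin.cases (motive := fun a => (∀ b, b ≠ a → g b = []) → _ = g a) ?_ (fun a' => ?_) a h
    · intro h
      have : (List.ofFn fun i : Fin n => g i.succ).flatten = [] := by
        rw [List.flatten_eq_nil_iff]
        intro l hl
        rw [List.mem_ofFn] at hl
        obtain ⟨b, rfl⟩ := hl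
        exact h _ (Fin.succ_ne_zero b)
      rw [this, List.append_nil]
    · intro h
      rw [h 0 (Fin.succ_ne_zero a').symm, List.nil_append,
        ih (fun i => g i.succ) a' (fun b hb => h _ (fun e => hb (Fin.succ_injective _ e)))]

theorem card_filter_eq_countP {γ : Type*} (T : List γ) (P : γ → Prop) [DecidablePred P]
    [DecidablePred fun p : Fin T.length => P (T.get p)] :
    (Finset.univ.filter fun p : Fin T.length => P (T.get p)).card
      = T.countP (fun x => decide (P x)) := by
  have hT : (List.finRange T.length).map T.get = T := by
    apply List.ext_getElem <;> simp
  conv_rhs => rw [← hT]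
  rw [List.countP_map, List.countP_eq_length_filter, Fin.univ_def, Finset.card_def]
  simp only [Finset.filter_val, Multiset.filter_coe, Multiset.coe_card]
  congr 1
  apply List.filter_congr
  intro x _
  simp

/-- tagged gadget -/
def tagAG {β : Type*} (k ℓ : ℕ) (dollar : Fin k → β) (percent : β)
    (i : Fin k) (f : ℕ) {n : ℕ} (X : Fin n → List β) : List (β × ℕ) :=
  (strPow (gadgetAminus k ℓ dollar i) f).map (fun c => (c, 0)) ++
    (List.ofFn fun j : Fin n =>
      (gadgetA k ℓ dollar).map (fun c => (c, 3 * (j : ℕ) + 1))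
        ++ (X j).map (fun c => (c, 3 * (j : ℕ) + 2))
        ++ (List.replicate (2 * ℓ) percent).map (fun c => (c, 3 * (j : ℕ) + 3))).flatten ++
    (strPow (gadgetAminus k ℓ dollar i) f).map (fun c => (c, 3 * n + 1))

theorem tagAG_fst {β : Type*} (k ℓ : ℕ) (dollar : Fin k → β) (percent : β)
    (i : Fin k) (f : ℕ) {n : ℕ} (X : Fin n → List β) :
    (tagAG k ℓ dollar percent i f X).map Prod.fst = gadgetAG k ℓ dollar percent i f X := by
  simp [tagAG, gadgetAG, List.map_flatten, List.map_ofFn, Function.comp_def]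

theorem mem_gadgetA {β : Type*} {k ℓ : ℕ} {dollar : Fin k → β} {c : β}
    (h : c ∈ gadgetA k ℓ dollar) : ∃ j, c = dollar j := by
  simp only [gadgetA, List.mem_flatten, List.mem_ofFn] at h
  obtain ⟨l, ⟨j, rfl⟩, hc⟩ := h
  exact ⟨j, (List.mem_replicate.1 hc).2⟩

theorem mem_strPow {β : Type*} {k ℓ f : ℕ} {dollar : Fin k → β} {i : Fin k} {c : β}
    (h : c ∈ strPow (gadgetAminus k ℓ dollar i) f) : ∃ j, j ≠ i ∧ c = dollar j := by
  simp only [strPow, gadgetAminus, List.mem_flatten, List.mem_ofFn] at h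
  obtain ⟨l, hl, hc⟩ := h
  rw [(List.mem_replicate.1 hl).2] at hc
  simp only [List.mem_flatten, List.mem_ofFn] at hc
  obtain ⟨l, ⟨j, rfl⟩, hc⟩ := hc
  split_ifs at hc with hj
  · simp at hc
  · exact ⟨j, hj, (List.mem_replicate.1 hc).2⟩

theorem mem_tagAG {β : Type*} {k ℓ : ℕ} {dollar : Fin k → β} {percent : β}
    {i : Fin k} {f : ℕ} {n : ℕ} {X : Fin n → List β} {x : β × ℕ}
    (h : x ∈ tagAG k ℓ dollar percent i f X) :
    (x.2 = 0 ∧ ∃ j, j ≠ i ∧ x.1 = dollar j) ∨ (x.2 = 3 * n + 1 ∧ ∃ j, j ≠ i ∧ x.1 = dollar j) ∨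
    ∃ a : Fin n, (x.2 = 3 * a + 1 ∧ ∃ j, x.1 = dollar j) ∨ (x.2 = 3 * a + 2 ∧ x.1 ∈ X a) ∨
      (x.2 = 3 * a + 3 ∧ x.1 = percent) := by
  simp only [tagAG, List.mem_append, List.mem_flatten, List.mem_ofFn, List.mem_map] at h
  rcases h with (⟨c, hc, rfl⟩ | ⟨l, ⟨a, rfl⟩, h⟩) | ⟨c, hc, rfl⟩
  · exact Or.inl ⟨rfl, mem_strPow hc⟩
  · right; right
    refine ⟨a, ?_⟩
    simp only [List.mem_append, List.mem_map] at h
    rcases h with (⟨c, hc, rfl⟩ | ⟨c, hc, rfl⟩) | ⟨c, hc, rfl⟩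
    · exact Or.inl ⟨rfl, mem_gadgetA hc⟩
    · exact Or.inr (Or.inl ⟨rfl, hc⟩)
    · exact Or.inr (Or.inr ⟨rfl, (List.mem_replicate.1 hc).2⟩)
  · exact Or.inr (Or.inl ⟨rfl, mem_strPow hc⟩)

theorem filter_map_const {β : Type*} (l : List β) (u v : ℕ) :
    (l.map (fun c => (c, u))).filter (fun x => decide (x.2 = v))
      = if u = v then l.map (fun c => (c, u)) else [] := by
  split_ifs with h
  · rw [List.filter_eq_self]; intro x hx; simp only [List.mem_map] at hx
    obtain ⟨c, _, rfl⟩ := hx; simpa using h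
  · rw [List.filter_eq_nil_iff]; intro x hx; simp only [List.mem_map] at hx
    obtain ⟨c, _, rfl⟩ := hx; simpa using h

theorem filter_tagAG {β : Type*} (k ℓ : ℕ) (dollar : Fin k → β) (percent : β)
    (i : Fin k) (f : ℕ) {n : ℕ} (X : Fin n → List β) (a : Fin n) (r : ℕ) (hr : 1 ≤ r)
    (hr3 : r ≤ 3) :
    (tagAG k ℓ dollar percent i f X).filter (fun x => decide (x.2 = 3 * (a : ℕ) + r)) =
      (if r = 1 then gadgetA k ℓ dollar else if r = 2 then X a else
        List.replicate (2 * ℓ) percent).map (fun c => (c, 3 * (a : ℕ) + r)) := by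
  have ha := a.isLt
  unfold tagAG
  rw [List.filter_append, List.filter_append, filter_map_const, filter_map_const,
    if_neg (by omega), if_neg (by omega), List.filter_flatten, List.map_ofFn,
    flatten_ofFn_single _ a]
  · simp only [Function.comp_def, List.filter_append, filter_map_const, List.nil_append,
      List.append_nil]
    have : r = 1 ∨ r = 2 ∨ r = 3 := by omega
    rcases this with rfl | rfl | rfl <;> simp
  · intro b hb
    have hb' : (b : ℕ) ≠ a := fun e => hb (Fin.ext e)
    simp only [Function.comp_def, List.filter_append, filter_map_const]
    rw [if_neg (by omega), if_neg (by omega), if_neg (by omega)]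
    rfl

theorem pairwise_tagAG {β : Type*} (k ℓ : ℕ) (dollar : Fin k → β) (percent : β)
    (i : Fin k) (f : ℕ) {n : ℕ} (X : Fin n → List β) :
    (tagAG k ℓ dollar percent i f X).Pairwise (fun x y => x.2 ≤ y.2) := by
  have hc : ∀ (l : List β) (u : ℕ),
      (l.map (fun c => (c, u))).Pairwise (fun x y => x.2 ≤ y.2) := by
    intro l u
    rw [List.pairwise_map]
    exact List.pairwise_of_forall (fun _ _ => le_rfl)
  have hb : ∀ (j : ℕ) (P Q R : List β) (x : β × ℕ), x ∈ P.map (fun c => (c, 3 * j + 1))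
        ++ Q.map (fun c => (c, 3 * j + 2)) ++ R.map (fun c => (c, 3 * j + 3)) →
        3 * j + 1 ≤ x.2 ∧ x.2 ≤ 3 * j + 3 := by
    intro j P Q R x hx
    simp only [List.mem_append, List.mem_map] at hx
    rcases hx with (⟨c, _, rfl⟩ | ⟨c, _, rfl⟩) | ⟨c, _, rfl⟩ <;> simp
  unfold tagAG
  rw [List.pairwise_append, List.pairwise_append]
  refine ⟨⟨hc _ _, ?_, ?_⟩, hc _ _, ?_⟩
  · rw [List.pairwise_flatten]
    constructor
    · intro l hl
      rw [List.mem_ofFn] at hl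
      obtain ⟨j, rfl⟩ := hl
      rw [List.pairwise_append, List.pairwise_append]
      refine ⟨⟨hc _ _, hc _ _, ?_⟩, hc _ _, ?_⟩
      · intro x hx y hy
        simp only [List.mem_map] at hx hy
        obtain ⟨_, _, rfl⟩ := hx
        obtain ⟨_, _, rfl⟩ := hy
        simp
      · intro x hx y hy
        have := hb j _ _ [] x (by simpa using hx)
        simp only [List.mem_map] at hy
        obtain ⟨_, _, rfl⟩ := hy
        exact this.2
    · rw [List.pairwise_ofFn]
      intro a b hab x hx y hy
      have h1 := hb _ _ _ _ _ hx
      have h2 := hb _ _ _ _ _ hy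
      have : (a : ℕ) < b := hab
      omega
  · intro x hx y hy
    simp only [List.mem_map] at hx
    obtain ⟨_, _, rfl⟩ := hx
    simp
  · intro x hx y hy
    simp only [List.mem_map] at hy
    obtain ⟨_, _, rfl⟩ := hy
    rw [List.mem_append] at hx
    rcases hx with hx | hx
    · simp only [List.mem_map] at hx
      obtain ⟨_, _, rfl⟩ := hx
      simp
    · simp only [List.mem_flatten, List.mem_ofFn] at hx
      obtain ⟨l, ⟨a, rfl⟩, h⟩ := hx
      have h1 := hb _ _ _ _ _ h
      have := a.isLt
      show x.2 ≤ 3 * n + 1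
      omega

open Classical in
theorem count_gadgetA {β : Type*} (k ℓ : ℕ) (dollar : Fin k → β)
    (hdinj : Function.Injective dollar) (j : Fin k) :
    (gadgetA k ℓ dollar).countP (fun c => decide (c = dollar j)) = 2 * ℓ := by
  rw [List.countP_eq_length_filter, gadgetA, List.filter_flatten, List.map_ofFn,
    flatten_ofFn_single _ j]
  · simp
  · intro b hb
    simp only [Function.comp_def]
    rw [List.filter_eq_nil_iff]
    intro x hx
    rw [(List.mem_replicate.1 hx).2]
    simpa using fun e => hb (hdinj e)

theorem exists_tag {β : Type*} (Sig : Set β) (k ℓ : ℕ) (dollar : Fin k → β) (percent : β)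
    (hdinj : Function.Injective dollar)
    (hdp : ∀ i, dollar i ≠ percent) (hdS : ∀ i, dollar i ∉ Sig) (hpS : percent ∉ Sig)
    (i : Fin k) (f : ℕ) {n : ℕ} (X : Fin n → List β) (hX : ∀ j, ∀ c ∈ X j, c ∈ Sig)
    (T : List β) (hT : T.Sublist (gadgetAG k ℓ dollar percent i f X)) :
    ∃ τ, TagSpec Sig dollar percent ℓ i X T τ := by
  classical
  rw [← tagAG_fst, List.sublist_map_iff] at hT
  obtain ⟨T', hT', rfl⟩ := hT
  have hlen : (T'.map Prod.fst).length = T'.length := by simp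
  have hget : ∀ p : Fin (T'.map Prod.fst).length,
      (T'.map Prod.fst).get p = (T'.get (p.cast hlen)).1 := by intro p; simp
  have hmem : ∀ q : Fin T'.length, T'.get q ∈ tagAG k ℓ dollar percent i f X :=
    fun q => hT'.subset (List.get_mem _ _)
  have hmono : ∀ p q : Fin T'.length, p ≤ q → (T'.get p).2 ≤ (T'.get q).2 := by
    intro p q hpq
    rcases hpq.eq_or_lt with rfl | h
    · exact le_rfl
    · exact List.pairwise_iff_get.1 ((pairwise_tagAG k ℓ dollar percent i f X).sublist hT') _ _ h
  have hcard : ∀ (P : β × ℕ → Prop) [DecidablePred P]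
      [DecidablePred fun p : Fin (T'.map Prod.fst).length => P (T'.get (p.cast hlen))],
      (Finset.univ.filter fun p : Fin (T'.map Prod.fst).length =>
        P (T'.get (p.cast hlen))).card ≤
        (tagAG k ℓ dollar percent i f X).countP (fun x => decide (P x)) := by
    intro P _ _
    refine le_trans (le_of_eq ?_) (hT'.countP_le)
    rw [← card_filter_eq_countP T' P]
    refine Finset.card_bij (fun p _ => p.cast hlen) ?_ ?_ ?_
    · intro p hp; simpa using hp
    · intro p _ q _ h; exact Fin.cast_injective _ h
    · intro q hq; exact ⟨q.cast hlen.symm, by simpa using hq, rfl⟩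
  refine ⟨fun p => (T'.get (p.cast hlen)).2, ?_, ?_, ?_, ?_, ?_, ?_, ?_, ?_⟩
  · intro p q hpq
    exact hmono _ _ hpq
  · intro p
    rw [hget]
    have := mem_tagAG (hmem (p.cast hlen))
    generalize T'.get (p.cast hlen) = x at this
    obtain ⟨c, t⟩ := x
    dsimp only at this ⊢
    rcases this with ⟨rfl, j, _, rfl⟩ | ⟨rfl, j, _, rfl⟩ | ⟨a, ⟨rfl, j, rfl⟩ | ⟨rfl, h⟩ | ⟨rfl, rfl⟩⟩
    · exact iff_of_false (hdS j) (by rintro ⟨b, hb⟩; omega)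
    · exact iff_of_false (hdS j) (by rintro ⟨b, hb⟩; omega)
    · exact iff_of_false (hdS j) (by rintro ⟨b, hb⟩; omega)
    · exact iff_of_true (hX _ _ h) ⟨a, rfl⟩
    · exact iff_of_false hpS (by rintro ⟨b, hb⟩; omega)
  · intro p
    rw [hget]
    have := mem_tagAG (hmem (p.cast hlen))
    generalize T'.get (p.cast hlen) = x at this
    obtain ⟨c, t⟩ := x
    dsimp only at this ⊢
    rcases this with ⟨rfl, j, _, rfl⟩ | ⟨rfl, j, _, rfl⟩ | ⟨a, ⟨rfl, j, rfl⟩ | ⟨rfl, h⟩ | ⟨rfl, rfl⟩⟩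
    · exact iff_of_false (hdp j) (by rintro ⟨b, hb⟩; omega)
    · exact iff_of_false (hdp j) (by rintro ⟨b, hb⟩; omega)
    · exact iff_of_false (hdp j) (by rintro ⟨b, hb⟩; omega)
    · exact iff_of_false (fun e => hpS (e ▸ hX _ _ h)) (by rintro ⟨b, hb⟩; omega)
    · exact iff_of_true rfl ⟨a, rfl⟩
  · intro p
    rw [hget]
    have := mem_tagAG (hmem (p.cast hlen))
    generalize T'.get (p.cast hlen) = x at this
    obtain ⟨c, t⟩ := x
    dsimp only at this ⊢
    rcases this with ⟨rfl, j, hj, rfl⟩ | ⟨rfl, j, hj, rfl⟩ | ⟨a, ⟨rfl, j, rfl⟩ | ⟨rfl, h⟩ | ⟨rfl, rfl⟩⟩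
    · exact fun e => (hj (hdinj e)).elim
    · exact fun e => (hj (hdinj e)).elim
    · exact fun _ => ⟨a, rfl⟩
    · exact fun e => (hdS i (e ▸ hX _ _ h)).elim
    · exact fun e => (hdp i e.symm).elim
  · intro a j
    simp only [hget]
    refine (hcard (fun x => x.1 = dollar j ∧ x.2 = 3 * (a : ℕ) + 1)).trans ?_
    have h := filter_tagAG k ℓ dollar percent i f X a 1 le_rfl (by norm_num)
    simp only [Bool.decide_and]
    rw [← List.countP_filter, h, if_pos rfl, List.countP_map]
    exact (count_gadgetA k ℓ dollar hdinj j).le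
  · intro a
    refine (hcard (fun x => x.2 = 3 * (a : ℕ) + 3)).trans ?_
    have h := filter_tagAG k ℓ dollar percent i f X a 3 (by norm_num) (by norm_num)
    rw [List.countP_eq_length_filter, h]
    simp
  · intro a
    have h := filter_tagAG k ℓ dollar percent i f X a 2 (by norm_num) (by norm_num)
    have h2 := (hT'.filter (fun x => decide (x.2 = 3 * (a : ℕ) + 2))).map Prod.fst
    rw [h] at h2
    simp only [List.map_map, Function.comp_def, List.map_id'] at h2
    norm_num at h2
    refine Eq.subst (motive := fun l : List β => l.Sublist (X a)) (Eq.symm ?_) h2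
    have h3 : (List.finRange (T'.map Prod.fst).length).map (fun p => T'.get (p.cast hlen)) = T' := by
      apply List.ext_getElem <;> simp
    conv_rhs => rw [← h3]
    rw [List.filter_map, List.map_map]
    apply List.map_congr_left
    intro p _
    exact hget p
  · intro p
    rw [hget]
    have := mem_tagAG (hmem (p.cast hlen))
    generalize T'.get (p.cast hlen) = x at this
    obtain ⟨c, t⟩ := x
    dsimp only at this ⊢
    rcases this with ⟨rfl, j, hj, rfl⟩ | ⟨rfl, j, hj, rfl⟩ | ⟨a, ⟨rfl, j, rfl⟩ | ⟨rfl, h⟩ | ⟨rfl, rfl⟩⟩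
    · exact Or.inr (Or.inr ⟨j, rfl⟩)
    · exact Or.inr (Or.inr ⟨j, rfl⟩)
    · exact Or.inr (Or.inr ⟨j, rfl⟩)
    · exact Or.inl (hX _ _ h)
    · exact Or.inr (Or.inl rfl)

theorem sum_tight {ι : Type*} [Fintype ι] (f : ι → ℕ) (b : ℕ) (hle : ∀ x, f x ≤ b)
    (h : Fintype.card ι * b ≤ ∑ x, f x) (x : ι) : f x = b := by
  have h2 : ∑ x, f x = ∑ _x : ι, b := by
    refine le_antisymm (Finset.sum_le_sum fun x _ => hle x) ?_
    simpa using h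
  exact (Finset.sum_eq_sum_iff_of_le (fun x _ => hle x)).1 h2 x (Finset.mem_univ x)

theorem core {β : Type*} (Sig : Set β) {K k ℓ m n z : ℕ} (ix : Fin K → Fin k) (last : Fin k)
    (hcover : ∀ j, j = last ∨ ∃ i, j = ix i) (dollar : Fin k → β) (percent : β)
    (hdp : ∀ i, dollar i ≠ percent) (hdS : ∀ i, dollar i ∉ Sig) (hpS : percent ∉ Sig)
    (hℓ : 1 ≤ ℓ) (hm : 1 ≤ m)
    (X : Fin K → Fin n → List β) (Y : Fin m → List β) (hYlen : ∀ j, (Y j).length = ℓ)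
    (T : List β) (τ : Fin K → Fin T.length → ℕ) (σ : Fin T.length → ℕ)
    (hτ : ∀ i, TagSpec Sig dollar percent ℓ (ix i) (X i) T (τ i))
    (hσ : TagSpec Sig dollar percent ℓ last Y T σ)
    (hz : ∀ (idx : Fin K → Fin n) jy (U : List β), (∀ i, U.Sublist (X i (idx i))) →
      U.Sublist (Y jy) → U.length ≤ z + 1)
    (hD : 2 * ℓ * (2 * m + K * n) + (z + 1) * m ≤ T.length) :
    T.length = 2 * ℓ * (2 * m + K * n) + (z + 1) * m ∧
    ∃ Δ : Fin K → ℕ, (∀ i, Δ i + m ≤ n) ∧ ∀ j : Fin m, ∃ U : List β, U.length = z + 1 ∧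
      U.Sublist (Y j) ∧ ∀ i (h : Δ i + j < n), U.Sublist (X i ⟨Δ i + j, h⟩) := by
  classical
  let c : Fin K × Fin n → Finset (Fin T.length) := fun x =>
    Finset.univ.filter fun p => T.get p = dollar (ix x.1) ∧ τ x.1 p = 3 * x.2 + 1
  let d : Fin m → Finset (Fin T.length) := fun j =>
    Finset.univ.filter fun p => T.get p = dollar last ∧ σ p = 3 * j + 1
  let e : Fin m → Finset (Fin T.length) := fun j =>
    Finset.univ.filter fun p => σ p = 3 * j + 3
  let s : Fin m → Finset (Fin T.length) := fun j =>
    Finset.univ.filter fun p => σ p = 3 * j + 2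
  let V : Fin m → List β := fun j =>
    ((List.finRange T.length).filter fun p => decide (σ p = 3 * j + 2)).map T.get
  have hV : ∀ j, (V j).length = (s j).card := by
    intro j
    simp only [V, s, List.length_map]
    rw [Fin.univ_def, Finset.card_def]
    simp only [Finset.filter_val, Multiset.filter_coe, Multiset.coe_card]
  have hVY : ∀ j, (V j).Sublist (Y j) := fun j => hσ.sub j
  have hcov : (Finset.univ : Finset (Fin T.length)) ⊆
      ((Finset.univ.biUnion c ∪ Finset.univ.biUnion d) ∪ Finset.univ.biUnion e) ∪
        Finset.univ.biUnion s := by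
    intro p _
    simp only [Finset.mem_union, Finset.mem_biUnion, Finset.mem_univ, true_and, c, d, e, s,
      Finset.mem_filter]
    rcases hσ.all p with h | h | ⟨j, h⟩
    · exact Or.inr ((hσ.sig p).1 h)
    · exact Or.inl (Or.inr ((hσ.pct p).1 h))
    · rcases hcover j with rfl | ⟨i, rfl⟩
      · obtain ⟨a, ha⟩ := hσ.dol p h
        exact Or.inl (Or.inl (Or.inr ⟨a, h, ha⟩))
      · obtain ⟨a, ha⟩ := (hτ i).dol p h
        exact Or.inl (Or.inl (Or.inl ⟨(i, a), h, ha⟩))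
  have hN : T.length ≤ ∑ x, (c x).card + ∑ j, (d j).card + ∑ j, (e j).card + ∑ j, (s j).card := by
    have h1 := Finset.card_le_card hcov
    rw [Finset.card_univ, Fintype.card_fin] at h1
    refine h1.trans ((Finset.card_union_le _ _).trans (add_le_add ((Finset.card_union_le _ _).trans
      (add_le_add ((Finset.card_union_le _ _).trans (add_le_add ?_ ?_)) ?_)) ?_)) <;>
    exact Finset.card_biUnion_le
  have hcle : ∀ x, (c x).card ≤ 2 * ℓ := fun x => (hτ x.1).cntd x.2 (ix x.1)
  have hdle : ∀ j, (d j).card ≤ 2 * ℓ := fun j => hσ.cntd j last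
  have hele : ∀ j, (e j).card ≤ 2 * ℓ := fun j => hσ.cntp j
  have hsY : ∀ j, (s j).card ≤ ℓ := fun j => by
    rw [← hV, ← hYlen j]; exact (hVY j).length_le
  let bad : Fin m → Prop := fun j => ∃ i p p', σ p = 3 * j + 2 ∧ σ p' = 3 * j + 2 ∧ τ i p < τ i p'
  let skip : Fin K × Fin n → Prop := fun x => ∀ p, τ x.1 p ≠ 3 * x.2 + 1
  have hlt : ∀ i p q, τ i p < τ i q → p < q := by
    intro i p q h; by_contra hc; exact absurd ((hτ i).mono (not_lt.1 hc)) (not_le.2 h)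
  have hltσ : ∀ p q, σ p < σ q → p < q := by
    intro p q h; by_contra hc; exact absurd (hσ.mono (not_lt.1 hc)) (not_le.2 h)
  -- tags of alphabet positions
  have hsigtag : ∀ i p (j : Fin m), σ p = 3 * j + 2 → ∃ a : Fin n, τ i p = 3 * a + 2 :=
    fun i p j h => ((hτ i).sig p).1 ((hσ.sig p).2 ⟨j, h⟩)
  have hcsk : ∀ x, (c x).card + (if skip x then 2 * ℓ else 0) ≤ 2 * ℓ := by
    intro x
    split_ifs with h
    · have : c x = ∅ := by
        rw [Finset.eq_empty_iff_forall_notMem]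
        intro p hp
        exact h p (Finset.mem_filter.1 hp).2.2
      rw [this]; simp
    · exact hcle x
  have hVX : ∀ j, ¬ bad j → ∀ i p (a : Fin n), σ p = 3 * j + 2 → τ i p = 3 * a + 2 →
      (V j).Sublist (X i a) := by
    intro j hj i p a hp ha
    refine List.Sublist.trans ?_ ((hτ i).sub a)
    refine List.Sublist.map _ (List.monotone_filter_right _ ?_)
    intro q hq
    simp only [decide_eq_true_eq] at hq ⊢
    rw [← ha]
    by_contra hne
    rcases lt_or_gt_of_ne hne with h | h
    · exact hj ⟨i, q, p, hq, hp, h⟩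
    · exact hj ⟨i, p, q, hp, hq, h⟩
  have hsb : ∀ j, (s j).card ≤ (z + 1) + (if bad j then ℓ else 0) := by
    intro j
    split_ifs with h
    · have := hsY j; omega
    · rcases Finset.eq_empty_or_nonempty (s j) with h0 | ⟨p, hp⟩
      · rw [h0]; simp
      · have hp' : σ p = 3 * j + 2 := (Finset.mem_filter.1 hp).2
        choose idx hidx using fun i => hsigtag i p j hp'
        rw [← hV, add_zero]
        exact hz idx j _ (fun i => hVX j h i p _ hp' (hidx i)) (hVY j)
  have hinj : (Finset.univ.filter bad).card ≤ (Finset.univ.filter skip).card := by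
    refine Finset.card_le_card_of_forall_subsingleton
      (fun (j : Fin m) (x : Fin K × Fin n) => ∃ p p', σ p = 3 * j + 2 ∧ σ p' = 3 * j + 2 ∧ τ x.1 p < 3 * x.2 + 1 ∧
        3 * x.2 + 1 < τ x.1 p') ?_ ?_
    · intro j hj
      obtain ⟨i, p, p', hp, hp', h⟩ := (Finset.mem_filter.1 hj).2
      obtain ⟨a, ha⟩ := hsigtag i p j hp
      obtain ⟨b, hb⟩ := hsigtag i p' j hp'
      have hab : (a : ℕ) + 1 < n := by have := b.isLt; omega
      refine ⟨(i, ⟨a + 1, hab⟩), ?_, p, p', hp, hp', ?_, ?_⟩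
      · refine Finset.mem_filter.2 ⟨Finset.mem_univ _, ?_⟩
        intro q hq
        dsimp only at hq
        have h1 : p < q := hlt i _ _ (by omega)
        have h2 : q < p' := hlt i _ _ (by omega)
        have h3 := hσ.mono h1.le
        have h4 := hσ.mono h2.le
        obtain ⟨a', ha'⟩ := hsigtag i q j (by omega)
        omega
      · dsimp only; omega
      · dsimp only; omega
    · intro x _ j1 h1 j2 h2
      obtain ⟨_, p1, q1, hp1, hq1, h11, h12⟩ := h1
      obtain ⟨_, p2, q2, hp2, hq2, h21, h22⟩ := h2
      have a1 := hlt x.1 p1 q2 (by omega)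
      have a2 := hlt x.1 p2 q1 (by omega)
      have b1 := hσ.mono a1.le
      have b2 := hσ.mono a2.le
      apply Fin.ext
      omega
  have hCsum : ∑ x, (c x).card + 2 * ℓ * (Finset.univ.filter skip).card ≤ K * n * (2 * ℓ) := by
    have h := Finset.sum_le_sum fun x (_ : x ∈ Finset.univ) => hcsk x
    rw [Finset.sum_add_distrib, ← Finset.sum_filter] at h
    simp only [Finset.sum_const, smul_eq_mul, Finset.card_univ, Fintype.card_prod,
      Fintype.card_fin] at h
    linarith
  have hSsum : ∑ j, (s j).card ≤ m * (z + 1) + ℓ * (Finset.univ.filter bad).card := by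
    have h := Finset.sum_le_sum fun x (_ : x ∈ Finset.univ) => hsb x
    rw [Finset.sum_add_distrib, ← Finset.sum_filter] at h
    simp only [Finset.sum_const, smul_eq_mul, Finset.card_univ,
      Fintype.card_fin] at h
    linarith
  have hDsum : ∑ j, (d j).card ≤ m * (2 * ℓ) := by
    have h := Finset.sum_le_sum fun x (_ : x ∈ Finset.univ) => hdle x
    simpa using h
  have hEsum : ∑ j, (e j).card ≤ m * (2 * ℓ) := by
    have h := Finset.sum_le_sum fun x (_ : x ∈ Finset.univ) => hele x
    simpa using h
  have hinj' := Nat.mul_le_mul_left ℓ hinj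
  have hsk0 : ℓ * (Finset.univ.filter skip).card = 0 := by
    have : ℓ * (Finset.univ.filter skip).card ≤ 0 := by nlinarith
    omega
  have hbad0 : ℓ * (Finset.univ.filter bad).card = 0 := by omega
  have hnb : ∀ j, ¬ bad j := by
    have h1 : (Finset.univ.filter bad).card = 0 := by
      rcases Nat.mul_eq_zero.1 hbad0 with h | h
      · omega
      · exact h
    intro j hj
    rw [Finset.card_eq_zero, Finset.eq_empty_iff_forall_notMem] at h1
    exact h1 j (Finset.mem_filter.2 ⟨Finset.mem_univ _, hj⟩)
  have hsle : ∀ j, (s j).card ≤ z + 1 := by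
    intro j; have := hsb j; rwa [if_neg (hnb j), add_zero] at this
  rw [hbad0] at hSsum
  have hceq : ∀ x, (c x).card = 2 * ℓ := by
    apply sum_tight _ _ hcle
    simp only [Fintype.card_prod, Fintype.card_fin]
    nlinarith
  have heeq : ∀ x, (e x).card = 2 * ℓ := by
    apply sum_tight _ _ hele
    simp only [Fintype.card_fin]
    nlinarith
  have hseq : ∀ x, (s x).card = z + 1 := by
    apply sum_tight _ _ hsle
    simp only [Fintype.card_fin]
    nlinarith
  refine ⟨by nlinarith, ?_⟩
  have hex : ∀ j : Fin m, ∃ p, σ p = 3 * j + 2 := by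
    intro j
    have : (s j).Nonempty := by rw [← Finset.card_pos, hseq]; omega
    obtain ⟨p, hp⟩ := this
    exact ⟨p, (Finset.mem_filter.1 hp).2⟩
  choose P hP using hex
  choose a ha using fun i j => hsigtag i (P j) j (hP j)
  have hstep : ∀ i (j j' : Fin m), (j' : ℕ) = j + 1 → (a i j' : ℕ) = a i j + 1 := by
    intro i j j' hj
    have hPP : P j < P j' := hltσ _ _ (by rw [hP, hP]; omega)
    have hle := (hτ i).mono hPP.le
    rw [ha, ha] at hle
    have hne : (a i j : ℕ) ≠ a i j' := by
      intro heq
      have : (e j).Nonempty := by rw [← Finset.card_pos, heeq]; omega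
      obtain ⟨q, hq⟩ := this
      have hq' : σ q = 3 * j + 3 := (Finset.mem_filter.1 hq).2
      have h1 := (hτ i).mono (hltσ (P j) q (by rw [hP]; omega)).le
      have h2 := (hτ i).mono (hltσ q (P j') (by rw [hP]; omega)).le
      rw [ha] at h1 h2
      have h3 := ((hτ i).sig q).2 ⟨a i j, by omega⟩
      have h4 := (hσ.pct q).2 ⟨j, hq'⟩
      rw [h4] at h3
      exact hpS h3
    by_contra hne2
    have hb : (a i j : ℕ) + 2 < n := by have := (a i j').isLt; omega
    let b1 : Fin n := ⟨a i j + 1, by omega⟩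
    let b2 : Fin n := ⟨a i j + 2, hb⟩
    have hsub : c (i, b1) ∪ c (i, b2) ⊆
        Finset.univ.filter fun p => T.get p = dollar (ix i) ∧ σ p = 3 * j' + 1 := by
      intro q hq
      have hq' : T.get q = dollar (ix i) ∧
          (τ i q = 3 * (a i j + 1) + 1 ∨ τ i q = 3 * (a i j + 2) + 1) := by
        rcases Finset.mem_union.1 hq with h | h
        · exact ⟨(Finset.mem_filter.1 h).2.1, Or.inl (Finset.mem_filter.1 h).2.2⟩
        · exact ⟨(Finset.mem_filter.1 h).2.1, Or.inr (Finset.mem_filter.1 h).2.2⟩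
      obtain ⟨hq1, hq2⟩ := hq'
      refine Finset.mem_filter.2 ⟨Finset.mem_univ _, hq1, ?_⟩
      have h1 := hσ.mono (hlt i (P j) q (by rw [ha]; omega)).le
      have h2 := hσ.mono (hlt i q (P j') (by rw [ha]; omega)).le
      rw [hP] at h1 h2
      have n1 : ∀ b : Fin m, σ q ≠ 3 * b + 2 := fun b hb =>
        hdS (ix i) (hq1 ▸ (hσ.sig q).2 ⟨b, hb⟩)
      have n2 : ∀ b : Fin m, σ q ≠ 3 * b + 3 := fun b hb =>
        hdp (ix i) (hq1 ▸ (hσ.pct q).2 ⟨b, hb⟩)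
      have := n1 j
      have := n1 j'
      have := n2 j
      omega
    have hdisj : Disjoint (c (i, b1)) (c (i, b2)) := by
      rw [Finset.disjoint_left]
      intro q h1 h2
      have h1 := (Finset.mem_filter.1 h1).2.2
      have h2 := (Finset.mem_filter.1 h2).2.2
      simp only [b1, b2] at h1 h2
      omega
    have hcard := Finset.card_le_card hsub
    rw [Finset.card_union_of_disjoint hdisj, hceq, hceq] at hcard
    have := hσ.cntd j' (ix i)
    omega
  have hlin : ∀ i (t : ℕ) (h : t < m), (a i ⟨t, h⟩ : ℕ) = a i ⟨0, hm⟩ + t := by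
    intro i t
    induction t with
    | zero => intro h; rfl
    | succ t ih =>
      intro h
      rw [hstep i ⟨t, by omega⟩ ⟨t + 1, h⟩ rfl, ih (by omega)]
      omega
  refine ⟨fun i => a i ⟨0, hm⟩, ?_, ?_⟩
  · intro i
    have h1 := hlin i (m - 1) (by omega)
    have := (a i ⟨m - 1, by omega⟩).isLt
    dsimp only
    omega
  · intro j
    refine ⟨V j, by rw [hV, hseq], hVY j, ?_⟩
    intro i h
    have h1 : (⟨a i ⟨0, hm⟩ + j, h⟩ : Fin n) = a i j := Fin.ext (hlin i j j.isLt).symm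
    rw [h1]
    exact hVX j (hnb j) i (P j) _ (hP j) (ha i j)

theorem flatten_map_sublist {ι γ : Type*} (l : List ι) (g h : ι → List γ)
    (H : ∀ t ∈ l, (g t).Sublist (h t)) : (l.map g).flatten.Sublist (l.map h).flatten := by
  induction l with
  | nil => simp
  | cons t l ih =>
    simp only [List.map_cons, List.flatten_cons]
    exact (H t (by simp)).append (ih fun s hs => H s (by simp [hs]))

theorem flatten_ofFn_eq {γ : Type*} {n : ℕ} (g : Fin n → List γ) :
    (List.ofFn g) = (List.range n).map (fun t => if h : t < n then g ⟨t, h⟩ else []) := by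
  apply List.ext_getElem
  · simp
  · intro t h1 h2
    have : t < n := by simpa using h1
    simp [this]

theorem strPow_eq {γ : Type*} (W : List γ) (f : ℕ) :
    strPow W f = ((List.range f).map fun _ => W).flatten := by
  simp [strPow]

theorem strPow_mono {γ : Type*} (W : List γ) {f f' : ℕ} (h : f ≤ f') :
    (strPow W f).Sublist (strPow W f') := by
  obtain ⟨r, rfl⟩ := Nat.exists_eq_add_of_le h
  simp only [strPow]
  rw [List.replicate_add, List.flatten_append]
  exact List.sublist_append_left _ _

open Classical in
/-- The string `A` restricted to the blocks selected by `P`. -/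
noncomputable def partA {β : Type*} (k ℓ : ℕ) (dollar : Fin k → β) (P : Fin k → Prop) : List β :=
  (List.ofFn fun j : Fin k => if P j then List.replicate (2 * ℓ) (dollar j) else []).flatten

theorem partA_sub_A {β : Type*} (k ℓ : ℕ) (dollar : Fin k → β) (P : Fin k → Prop) :
    (partA k ℓ dollar P).Sublist (gadgetA k ℓ dollar) := by
  unfold partA gadgetA
  rw [flatten_ofFn_eq, flatten_ofFn_eq]
  apply flatten_map_sublist
  intro t ht
  rw [List.mem_range] at ht
  simp only [ht, dite_true]
  split_ifs <;> simp

theorem partA_sub_Aminus {β : Type*} (k ℓ : ℕ) (dollar : Fin k → β) (P : Fin k → Prop)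
    (i : Fin k) (hi : ¬ P i) :
    (partA k ℓ dollar P).Sublist (gadgetAminus k ℓ dollar i) := by
  unfold partA gadgetAminus
  rw [flatten_ofFn_eq, flatten_ofFn_eq]
  apply flatten_map_sublist
  intro t ht
  rw [List.mem_range] at ht
  simp only [ht, dite_true]
  split_ifs with h1 h2
  · rw [h2] at h1; exact (hi h1).elim
  · simp
  · simp
  · simp

theorem partA_length {β : Type*} (k ℓ : ℕ) (dollar : Fin k → β) (P Q : Fin k → Prop)
    (last : Fin k) (hP : ¬ P last) (hQ : ¬ Q last) (hPQ : ∀ j, j ≠ last → (P j ↔ ¬ Q j)) :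
    (partA k ℓ dollar P).length + (partA k ℓ dollar Q).length = 2 * ℓ * (k - 1) := by
  classical
  unfold partA
  simp only [List.length_flatten, List.map_ofFn, List.sum_ofFn, Function.comp_def]
  rw [← Finset.sum_add_distrib]
  have : ∀ j, (if P j then List.replicate (2 * ℓ) (dollar j) else []).length +
      (if Q j then List.replicate (2 * ℓ) (dollar j) else []).length =
      if j ∈ Finset.univ.erase last then 2 * ℓ else 0 := by
    intro j
    by_cases hj : j = last
    · subst hj; simp [hP, hQ]
    · have := hPQ j hj
      by_cases h : Q j <;> simp [h, this, hj]
  rw [Finset.sum_congr rfl fun j _ => this j, Finset.sum_ite_mem]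
  simp [Finset.card_erase_of_mem, mul_comm]

theorem gadgetA_length {β : Type*} (k ℓ : ℕ) (dollar : Fin k → β) :
    (gadgetA k ℓ dollar).length = 2 * ℓ * k := by
  simp [gadgetA, List.length_flatten, List.map_ofFn, List.sum_ofFn, Function.comp_def, mul_comm]

/-- the witness -/
noncomputable def wit {β : Type*} (k ℓ : ℕ) (dollar : Fin k → β) (percent : β) (last : Fin k)
    (f : ℕ) (Δ : Fin k → ℕ) {m : ℕ} (U : Fin m → List β) : List β :=
  ((List.range f).map fun t => partA k ℓ dollar fun j => j ≠ last ∧ f - Δ j ≤ t).flatten ++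
  (List.ofFn fun j : Fin m =>
      gadgetA k ℓ dollar ++ U j ++ List.replicate (2 * ℓ) percent).flatten ++
  ((List.range f).map fun t => partA k ℓ dollar fun j => j ≠ last ∧ t < f - Δ j).flatten

theorem wit_length {β : Type*} (k ℓ : ℕ) (hk : 1 ≤ k) (dollar : Fin k → β) (percent : β)
    (last : Fin k)
    (f : ℕ) (Δ : Fin k → ℕ) {m : ℕ} (U : Fin m → List β) (z : ℕ) (hU : ∀ j, (U j).length = z + 1) :
    (wit k ℓ dollar percent last f Δ U).length
      = 2 * ℓ * (2 * m + (k - 1) * (f + m)) + (z + 1) * m := by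
  unfold wit
  simp only [List.length_append]
  have h1 : ∀ f', ((List.range f').map fun t =>
      partA k ℓ dollar fun j => j ≠ last ∧ f - Δ j ≤ t).flatten.length +
      ((List.range f').map fun t =>
      partA k ℓ dollar fun j => j ≠ last ∧ t < f - Δ j).flatten.length = f' * (2 * ℓ * (k - 1)) := by
    intro f'
    induction f' with
    | zero => simp
    | succ f' ih =>
      have := partA_length k ℓ dollar (fun j => j ≠ last ∧ f - Δ j ≤ f')
        (fun j => j ≠ last ∧ f' < f - Δ j) last (by simp) (by simp)
        (by intro j hj; simp [hj])
      rw [List.range_succ]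
      simp only [List.map_append, List.flatten_append, List.length_append, List.map_cons,
        List.map_nil, List.flatten_cons, List.flatten_nil, List.append_nil]
      rw [Nat.succ_mul]
      omega
  have h2 : (List.ofFn fun j : Fin m =>
      gadgetA k ℓ dollar ++ U j ++ List.replicate (2 * ℓ) percent).flatten.length
      = m * (2 * ℓ * k + (z + 1) + 2 * ℓ) := by
    simp [List.length_flatten, List.map_ofFn, List.sum_ofFn, Function.comp_def, gadgetA_length, hU]
    left; omega
  rw [h2]
  have := h1 f
  obtain ⟨K, rfl⟩ := Nat.exists_eq_add_of_le hk
  simp only [Nat.add_sub_cancel_left] at *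
  nlinarith

theorem wit_sub_y {β : Type*} (k ℓ : ℕ) (dollar : Fin k → β) (percent : β)
    (last : Fin k)
    (f : ℕ) (Δ : Fin k → ℕ) {m : ℕ} (U : Fin m → List β) (Y : Fin m → List β)
    (hU : ∀ j, (U j).Sublist (Y j)) :
    (wit k ℓ dollar percent last f Δ U).Sublist (gadgetAG k ℓ dollar percent last f Y) := by
  unfold wit gadgetAG
  refine List.Sublist.append (List.Sublist.append ?_ ?_) ?_
  · rw [strPow_eq]
    exact flatten_map_sublist _ _ _ fun t _ => partA_sub_Aminus _ _ _ _ _ (by simp)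
  · rw [flatten_ofFn_eq, flatten_ofFn_eq]
    apply flatten_map_sublist
    intro t ht
    rw [List.mem_range] at ht
    simp only [ht, dite_true]
    exact ((List.Sublist.refl _).append (hU _)).append (List.Sublist.refl _)
  · rw [strPow_eq]
    exact flatten_map_sublist _ _ _ fun t _ => partA_sub_Aminus _ _ _ _ _ (by simp)

theorem wit_sub_x {β : Type*} (k ℓ : ℕ) (dollar : Fin k → β) (percent : β)
    (last : Fin k)
    (f : ℕ) (Δ : Fin k → ℕ) {m n : ℕ} (U : Fin m → List β) (X : Fin n → List β)
    (i : Fin k) (hΔ : Δ i ≤ f) (hn : n = f + m)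
    (hU : ∀ (j : Fin m) (h : Δ i + j < n), (U j).Sublist (X ⟨Δ i + j, h⟩)) :
    (wit k ℓ dollar percent last f Δ U).Sublist (gadgetAG k ℓ dollar percent i f X) := by
  obtain ⟨r, hr⟩ := Nat.exists_eq_add_of_le' hΔ
  have hfr : f - Δ i = r := by omega
  unfold wit gadgetAG
  rw [flatten_ofFn_eq, flatten_ofFn_eq]
  set g : ℕ → List β := fun t => if h : t < n then gadgetA k ℓ dollar ++ X ⟨t, h⟩ ++
    List.replicate (2 * ℓ) percent else [] with hg
  have hgA : ∀ t P, t < n → (partA k ℓ dollar P).Sublist (g t) := by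
    intro t P ht
    simp only [hg, ht, dite_true, List.append_assoc]
    exact (partA_sub_A k ℓ dollar P).trans (List.sublist_append_left _ _)
  have hsplit : ((List.range n).map g).flatten =
      ((List.range (Δ i)).map g).flatten ++ ((List.range m).map fun t => g (Δ i + t)).flatten ++
      ((List.range r).map fun t => g (Δ i + m + t)).flatten := by
    have : n = Δ i + m + r := by omega
    rw [this, List.range_add, List.range_add]
    simp [List.map_map, Function.comp_def]
  have hrf : List.range f = List.range r ++ (List.range (Δ i)).map (r + ·) := by
    rw [hr, List.range_add]
  rw [hsplit]
  have e : ∀ a b c d e : List β, a ++ (b ++ c ++ d) ++ e = (a ++ b) ++ c ++ (d ++ e) := by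
    intros; simp
  rw [e]
  refine List.Sublist.append (List.Sublist.append ?_ ?_) ?_
  · rw [hrf, List.map_append, List.flatten_append]
    refine List.Sublist.append (List.Sublist.trans ?_ (strPow_mono _ (show r ≤ f by omega))) ?_
    · rw [strPow_eq]
      refine flatten_map_sublist _ _ _ fun t ht => partA_sub_Aminus _ _ _ _ _ ?_
      rw [List.mem_range] at ht
      rw [hfr]
      rintro ⟨_, h⟩; omega
    · rw [List.map_map]
      refine flatten_map_sublist _ _ _ fun t ht => hgA _ _ ?_
      rw [List.mem_range] at ht
      omega
  · apply flatten_map_sublist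
    intro t ht
    rw [List.mem_range] at ht
    have : Δ i + t < n := by omega
    simp only [hg, ht, this, dite_true]
    exact ((List.Sublist.refl _).append (hU ⟨t, ht⟩ _)).append (List.Sublist.refl _)
  · rw [hrf, List.map_append, List.flatten_append]
    refine List.Sublist.append ?_ (List.Sublist.trans ?_ (strPow_mono _ hΔ))
    · refine flatten_map_sublist _ _ _ fun t ht => hgA _ _ ?_
      rw [List.mem_range] at ht
      omega
    · rw [strPow_eq, List.map_map]
      refine flatten_map_sublist _ _ _ fun t ht => partA_sub_Aminus _ _ _ _ _ ?_
      rw [hfr]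
      rintro ⟨_, h⟩
      have h' : r + t < r := h
      omega

theorem lcs_bdd {α : Type*} (L : List (List α)) (s : List α) (hs : s ∈ L) :
    BddAbove { m : ℕ | ∃ T : List α, T.length = m ∧ ∀ s ∈ L, T.Sublist s } := by
  refine ⟨s.length, ?_⟩
  rintro _ ⟨T, rfl, h⟩
  exact (h s hs).length_le

theorem le_lcsLen {α : Type*} (L : List (List α)) (s : List α) (hs : s ∈ L) (T : List α)
    (h : ∀ s ∈ L, T.Sublist s) : T.length ≤ lcsLen L :=
  le_csSup (lcs_bdd L s hs) (show T.length ∈ _ from ⟨T, rfl, h⟩)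

theorem lcsLen_attained {α : Type*} (L : List (List α)) (s : List α) (hs : s ∈ L) :
    ∃ T : List α, T.length = lcsLen L ∧ ∀ s ∈ L, T.Sublist s :=
  Nat.sSup_mem (s := { m : ℕ | ∃ T : List α, T.length = m ∧ ∀ s ∈ L, T.Sublist s })
    ⟨0, [], rfl, fun _ _ => List.nil_sublist _⟩ (lcs_bdd L s hs)

theorem at_split {β : Type*} (c : β) (R : ℕ) (G H T : List β) (hG : c ∉ G) (hH : c ∉ H)
    (h1 : T.Sublist (List.replicate R c ++ G)) (h2 : T.Sublist (H ++ List.replicate R c))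
    (hc : c ∈ T) : T.length ≤ R := by
  obtain ⟨T1, T2, rfl, a1, a2⟩ := List.sublist_append_iff.1 h1
  obtain ⟨S1, S2, hS, b1, b2⟩ := List.sublist_append_iff.1 h2
  have hT2 : c ∉ T2 := fun h => hG (a2.subset h)
  have hS1 : c ∉ S1 := fun h => hH (b1.subset h)
  have hT1 : ∀ x ∈ T1, x = c := fun x hx => (List.mem_replicate.1 (a1.subset hx)).2
  have hS2 : ∀ x ∈ S2, x = c := fun x hx => (List.mem_replicate.1 (b2.subset hx)).2
  have hS1nil : S1 = [] := by
    cases S1 with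
    | nil => rfl
    | cons y S1 =>
      cases T1 with
      | nil => exact (hT2 (by simpa using hc)).elim
      | cons x T1 =>
        simp only [List.cons_append, List.cons.injEq] at hS
        exact (hS1 (by rw [← hT1 x (by simp), hS.1]; simp)).elim
  subst hS1nil
  rw [hS, List.nil_append]
  simpa using b2.length_le

theorem sub_of_notMem {β : Type*} (c : β) (R : ℕ) (G T : List β) (hc : c ∉ T)
    (h : T.Sublist (List.replicate R c ++ G)) : T.Sublist G := by
  obtain ⟨T1, T2, rfl, a1, a2⟩ := List.sublist_append_iff.1 h
  cases T1 with
  | nil => simpa using a2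
  | cons x T1 =>
    have := (List.mem_replicate.1 (a1.subset (List.mem_cons_self (a := x)))).2
    exact (hc (by simp [this])).elim

theorem sub_of_notMem' {β : Type*} (c : β) (R : ℕ) (G T : List β) (hc : c ∉ T)
    (h : T.Sublist (G ++ List.replicate R c)) : T.Sublist G := by
  obtain ⟨T1, T2, rfl, a1, a2⟩ := List.sublist_append_iff.1 h
  cases T2 with
  | nil => simpa using a1
  | cons x T2 =>
    have := (List.mem_replicate.1 (a2.subset (List.mem_cons_self (a := x)))).2
    exact (hc (by simp [this])).elim

theorem notMem_AG {β : Type*} (Sig : Set β) (k ℓ : ℕ) (dollar : Fin k → β) (percent atSym : β)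
    (hda : ∀ i, dollar i ≠ atSym) (hpa : percent ≠ atSym) (haS : atSym ∉ Sig)
    (i : Fin k) (f : ℕ) {n : ℕ} (X : Fin n → List β) (hX : ∀ j, ∀ c ∈ X j, c ∈ Sig) :
    atSym ∉ gadgetAG k ℓ dollar percent i f X := by
  rw [← tagAG_fst, List.mem_map]
  rintro ⟨x, hx, h⟩
  rcases mem_tagAG hx with ⟨_, j, _, e⟩ | ⟨_, j, _, e⟩ | ⟨a, ⟨_, j, e⟩ | ⟨_, e⟩ | ⟨_, e⟩⟩
  · exact hda j (e.symm.trans h)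
  · exact hda j (e.symm.trans h)
  · exact hda j (e.symm.trans h)
  · exact haS (h ▸ hX _ _ e)
  · exact hpa (e.symm.trans h)
/-- perfect alignment gadget, Theorem `PerfectAlignmentWorks`. -/
theorem perfect_alignment_gadget
    {β : Type*} (k ℓ m n : ℕ) (hk : 2 ≤ k) (hℓ : 1 ≤ ℓ) (hm : 1 ≤ m) (hmn : m < n)
    (Sig : Set β)
    (X : Fin (k - 1) → Fin n → List β) (Y : Fin m → List β)
    (hXlen : ∀ i j, (X i j).length = ℓ) (hYlen : ∀ j, (Y j).length = ℓ)
    (hXin : ∀ i j, ∀ c ∈ X i j, c ∈ Sig) (hYin : ∀ j, ∀ c ∈ Y j, c ∈ Sig)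
    (dollar : Fin k → β) (percent atSym : β)
    (hdinj : Function.Injective dollar)
    (hdp : ∀ i, dollar i ≠ percent) (hda : ∀ i, dollar i ≠ atSym) (hpa : percent ≠ atSym)
    (hdS : ∀ i, dollar i ∉ Sig) (hpS : percent ∉ Sig) (haS : atSym ∉ Sig)
    (z : ℕ)
    (hz : ∀ (idx : Fin (k - 1) → Fin n) (jy : Fin m),
      lcsLen ((List.ofFn fun p => X p (idx p)) ++ [Y jy]) = z ∨
      lcsLen ((List.ofFn fun p => X p (idx p)) ++ [Y jy]) = z + 1)
    (D : ℕ) (hD : D = 2 * ℓ * (2 * m + (k - 1) * n) + (z + 1) * m) :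
    ((∃ Δ : Fin (k - 1) → ℕ, ∃ hΔ : ∀ p, Δ p ≤ n - m,
        ∀ jy : Fin m,
          lcsLen ((List.ofFn fun p =>
              X p ⟨Δ p + jy, by have h1 := hΔ p; have h2 := jy.isLt; omega⟩) ++ [Y jy])
            = z + 1) →
      lcsLen
        ((List.ofFn fun i : Fin (k - 1) =>
            gadgetSAGx k ℓ dollar percent atSym D (i.castLE (Nat.sub_le k 1)) (n - m) (X i))
          ++ [gadgetSAGy k ℓ dollar percent atSym D ⟨k - 1, by omega⟩ (n - m) Y]) = D) ∧
    ((∀ (Δ : Fin (k - 1) → ℕ) (hΔ : ∀ p, Δ p ≤ n - m),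
        ∃ jy : Fin m,
          lcsLen ((List.ofFn fun p =>
              X p ⟨Δ p + jy, by have h1 := hΔ p; have h2 := jy.isLt; omega⟩) ++ [Y jy])
            ≠ z + 1) →
      lcsLen
        ((List.ofFn fun i : Fin (k - 1) =>
            gadgetSAGx k ℓ dollar percent atSym D (i.castLE (Nat.sub_le k 1)) (n - m) (X i))
          ++ [gadgetSAGy k ℓ dollar percent atSym D ⟨k - 1, by omega⟩ (n - m) Y]) = D - 1) := by
  classical
  set last : Fin k := ⟨k - 1, by omega⟩ with hlast
  set ix : Fin (k - 1) → Fin k := fun i => i.castLE (Nat.sub_le k 1) with hix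
  set SY := gadgetSAGy k ℓ dollar percent atSym D last (n - m) Y with hSY
  have hD1 : 1 ≤ D := by
    have : 1 ≤ (z + 1) * m := Nat.mul_pos (by omega) hm
    omega
  have hmemX : ∀ i, gadgetSAGx k ℓ dollar percent atSym D (ix i) (n - m) (X i) ∈
      ((List.ofFn fun i : Fin (k - 1) =>
            gadgetSAGx k ℓ dollar percent atSym D (i.castLE (Nat.sub_le k 1)) (n - m) (X i))
          ++ [SY]) := fun i => List.mem_append_left _ (List.mem_ofFn.2 ⟨i, rfl⟩)
  have hmemY : SY ∈ ((List.ofFn fun i : Fin (k - 1) =>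
            gadgetSAGx k ℓ dollar percent atSym D (i.castLE (Nat.sub_le k 1)) (n - m) (X i))
          ++ [SY]) := by simp
  have hall : ∀ T : List β, (∀ i, T.Sublist (gadgetSAGx k ℓ dollar percent atSym D (ix i) (n - m) (X i)))
      → T.Sublist SY → ∀ s ∈ ((List.ofFn fun i : Fin (k - 1) =>
            gadgetSAGx k ℓ dollar percent atSym D (i.castLE (Nat.sub_le k 1)) (n - m) (X i))
          ++ [SY]), T.Sublist s := by
    intro T h1 h2 s hs
    rcases List.mem_append.1 hs with h | h
    · obtain ⟨i, rfl⟩ := List.mem_ofFn.1 h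
      exact h1 i
    · rw [List.mem_singleton.1 h]; exact h2
  have hlow : D - 1 ≤ lcsLen ((List.ofFn fun i : Fin (k - 1) =>
            gadgetSAGx k ℓ dollar percent atSym D (i.castLE (Nat.sub_le k 1)) (n - m) (X i))
          ++ [SY]) := by
    have := le_lcsLen _ _ hmemY (List.replicate (D - 1) atSym)
      (hall _ (fun i => List.sublist_append_left _ _) (List.sublist_append_right _ _))
    simpa using this
  have hcommon : ∀ (idx : Fin (k - 1) → Fin n) (jy : Fin m) (U : List β),
      (∀ i, U.Sublist (X i (idx i))) → U.Sublist (Y jy) →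
      U.length ≤ lcsLen ((List.ofFn fun p => X p (idx p)) ++ [Y jy]) := by
    intro idx jy U h1 h2
    refine le_lcsLen _ (Y jy) (by simp) U ?_
    intro s hs
    rcases List.mem_append.1 hs with h | h
    · obtain ⟨i, rfl⟩ := List.mem_ofFn.1 h
      exact h1 i
    · rw [List.mem_singleton.1 h]; exact h2
  have hupper : ∀ T : List β,
      (∀ i, T.Sublist (gadgetSAGx k ℓ dollar percent atSym D (ix i) (n - m) (X i))) →
      T.Sublist SY → D ≤ T.length →
      T.length = D ∧ ∃ Δ : Fin (k - 1) → ℕ, (∀ i, Δ i + m ≤ n) ∧ ∀ j : Fin m, ∃ U : List β,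
        U.length = z + 1 ∧
        U.Sublist (Y j) ∧ ∀ i (h : Δ i + j < n), U.Sublist (X i ⟨Δ i + j, h⟩) := by
    intro T h1 h2 hDT
    have hY := notMem_AG Sig k ℓ dollar percent atSym hda hpa haS last (n - m) Y hYin
    have hc : atSym ∉ T := by
      intro hc
      have := at_split atSym (D - 1) _ _ T
        (notMem_AG Sig k ℓ dollar percent atSym hda hpa haS (ix ⟨0, by omega⟩) (n - m)
          (X ⟨0, by omega⟩) (hXin _)) hY (h1 _) h2 hc
      omega
    have h1' := fun i => sub_of_notMem atSym (D - 1) _ T hc (h1 i)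
    have h2' := sub_of_notMem' atSym (D - 1) _ T hc h2
    choose τ hτ using fun i => exists_tag Sig k ℓ dollar percent hdinj hdp hdS hpS (ix i) (n - m)
      (X i) (hXin i) T (h1' i)
    obtain ⟨σ, hσ⟩ := exists_tag Sig k ℓ dollar percent hdinj hdp hdS hpS last (n - m)
      Y hYin T h2'
    rw [hD] at hDT ⊢
    refine core Sig ix last ?_ dollar percent hdp hdS hpS hℓ hm X Y hYlen T τ σ hτ hσ ?_ hDT
    · intro j
      by_cases hj : (j : ℕ) < k - 1
      · exact Or.inr ⟨⟨j, hj⟩, rfl⟩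
      · left; apply Fin.ext; have := j.isLt; simp only [hlast]; omega
    · intro idx jy U a1 a2
      have := hcommon idx jy U a1 a2
      rcases hz idx jy with h | h <;> omega
  obtain ⟨T, hTlen, hT⟩ := lcsLen_attained _ _ hmemY
  have hTX := fun i => hT _ (hmemX i)
  have hTY := hT _ hmemY
  constructor
  · rintro ⟨Δ, hΔ, hgood⟩
    refine le_antisymm ?_ ?_
    · by_contra hlt
      have := (hupper T hTX hTY (by omega)).1
      omega
    · choose U hUlen hU using fun jy => lcsLen_attained _ (Y jy)
        (show Y jy ∈ ((List.ofFn fun p =>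
              X p ⟨Δ p + jy, by have h1 := hΔ p; have h2 := jy.isLt; omega⟩) ++ [Y jy]) by simp)
      let Δ' : Fin k → ℕ := fun j => if h : (j : ℕ) < k - 1 then Δ ⟨j, h⟩ else 0
      have hΔ' : ∀ i, Δ' (ix i) = Δ i := by
        intro i
        have : ((ix i : Fin k) : ℕ) < k - 1 := i.isLt
        simp only [Δ', this, dite_true]
        rfl
      have hwl := wit_length k ℓ (by omega) dollar percent last (n - m) Δ' U z
        (fun j => (hUlen j).trans (hgood j))
      rw [Nat.sub_add_cancel hmn.le, ← hD] at hwl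
      refine hwl.symm.le.trans ?_
      refine le_lcsLen _ _ hmemY _ (hall _ ?_ ?_)
      · intro i
        refine List.Sublist.trans ?_ (List.sublist_append_right _ _)
        refine wit_sub_x k ℓ dollar percent last (n - m) Δ' U (X i) (ix i)
          (by rw [hΔ']; exact hΔ i) (by omega) ?_
        intro j h
        refine hU j _ (List.mem_append_left _ (List.mem_ofFn.2 ⟨i, ?_⟩))
        simp only [hΔ']
      · refine List.Sublist.trans ?_ (List.sublist_append_left _ _)
        exact wit_sub_y k ℓ dollar percent last (n - m) Δ' U Y fun j => hU j _ (by simp)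
  · intro hno
    refine le_antisymm ?_ hlow
    by_contra hlt
    obtain ⟨_, Δ, hΔ, hgood⟩ := hupper T hTX hTY (by omega)
    obtain ⟨jy, hjy⟩ := hno Δ (fun p => by have := hΔ p; omega)
    obtain ⟨U, hU1, hU2, hU3⟩ := hgood jy
    have h1 := hcommon (fun p => ⟨Δ p + jy, by have h1 := hΔ p; have h2 := jy.isLt; omega⟩) jy U
      (fun i => hU3 i _) hU2
    rcases hz (fun p => ⟨Δ p + jy, by have h1 := hΔ p; have h2 := jy.isLt; omega⟩) jy with h | h
    · omega
    · exact hjy h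
end

section
/- Fix integers k ≥ 2, ℓ ≥ 1, and 1 ≤ m < n. Let X_1, …, X_{k−1} be lists of n strings each and let Y be a list of m strings, where every string occurring in these lists has length exactly ℓ and is over an alphabet Σ. Suppose there is an integer z such that for every choice of strings S_1 ∈ X_1, …, S_{k−1} ∈ X_{k−1}, S_y ∈ Y, the value LCS(S_1, …, S_{k−1}, S_y) is either z or z+1. Let $_1, …, $_k, %, @ be k+2 pairwise distinct symbols not in Σ, and set A = $_1^{2ℓ} · $_2^{2ℓ} ⋯ $_k^{2ℓ}, A_{−i} = A with the block $_i^{2ℓ} removed, B = %^{2ℓ}, f = n − m, and D = 2ℓ(2m + (k−1)n) + zm + 1. Define AG_i(X_i) = A_{−i}^f · (A · X_i[1] · B) ⋯ (A · X_i[n] · B) · A_{−i}^f for i ∈ [1..k−1], AG_y(Y) = A_{−k}^f · (A · Y[1] · B) ⋯ (A · Y[m] · B) · A_{−k}^f, and SAG_i(X_i) = @^{D−1} · AG_i(X_i), SAG_y(Y) = AG_y(Y) · @^{D−1}. If there is exactly one tuple of indices (i_1, …, i_{k−1}, i_k) ∈ [1..n]^{k−1} × [1..m] with LCS(X_1[i_1],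 …, X_{k−1}[i_{k−1}], Y[i_k]) = z+1, and this tuple can be realized by a perfect alignment (i.e., there exist offsets Δ_1, …, Δ_{k−1} ∈ [0..n−m] with i_p = Δ_p + i_k for all p ∈ [1..k−1]), then LCS(SAG_1(X_1), …, SAG_{k−1}(X_{k−1}), SAG_y(Y)) = D. If no tuple of indices (i_1, …, i_{k−1}, i_k) ∈ [1..n]^{k−1} × [1..m] satisfies LCS(X_1[i_1], …, X_{k−1}[i_{k−1}], Y[i_k]) = z+1, then LCS(SAG_1(X_1), …, SAG_{k−1}(X_{k−1}), SAG_y(Y)) = D − 1. -/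
namespace BAG

open scoped List

lemma lcs_set_bdd {α : Type*} (L : List (List α)) (s : List α) (hs : s ∈ L) :
    BddAbove { m : ℕ | ∃ T : List α, T.length = m ∧ ∀ s ∈ L, T.Sublist s } := by
  refine ⟨s.length, ?_⟩
  rintro x ⟨T, rfl, h⟩
  exact (h s hs).length_le

lemma le_lcsLen {α : Type*} (L : List (List α)) (s : List α) (hs : s ∈ L) (T : List α)
    (hT : ∀ s ∈ L, T.Sublist s) : T.length ≤ lcsLen L :=
  le_csSup (lcs_set_bdd L s hs) ⟨T, rfl, hT⟩

lemma lcsLen_le {α : Type*} (L : List (List α)) (b : ℕ)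
    (h : ∀ T : List α, (∀ s ∈ L, T.Sublist s) → T.length ≤ b) : lcsLen L ≤ b := by
  refine csSup_le ⟨0, [], rfl, by simp⟩ ?_
  rintro x ⟨T, rfl, hT⟩
  exact h T hT

lemma exists_lcs {α : Type*} (L : List (List α)) (s : List α) (hs : s ∈ L) :
    ∃ T : List α, T.length = lcsLen L ∧ ∀ s ∈ L, T.Sublist s := by
  have := Nat.sSup_mem (s := { m : ℕ | ∃ T : List α, T.length = m ∧ ∀ s ∈ L, T.Sublist s })
    ⟨0, [], rfl, by simp⟩ (lcs_set_bdd L s hs)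
  exact this

/-- segments lemma -/
lemma seg_count {β : Type*} [DecidableEq β] (d : β) (c : ℕ) (p : β → Bool)
    (Good : List β → Prop) [DecidablePred Good] (hd : p d = false) :
    ∀ (m : ℕ) (a Z b : Fin m → List β) (Q G : List β),
      (∀ j, ∀ x ∈ Z j, p x = true) →
      (∀ H Z, H <:+: G → Z <+ H → (∀ x ∈ Z, p x = true) → ¬ Good Z → c ≤ H.count d) →
      ((List.ofFn fun j => a j ++ Z j ++ b j).flatten ++ Q) <+ G →
      ((List.ofFn fun j => a j ++ Z j ++ b j).flatten ++ Q).count d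
        + c * ∑ j, (if Good (Z j) then 0 else 1) ≤ G.count d := by
  intro m
  induction m with
  | zero =>
    intro a Z b Q G _ _ h
    simpa using h.count_le d
  | succ m ih =>
    intro a Z b Q G hZ hG h
    rw [List.ofFn_succ, List.flatten_cons, List.append_assoc, List.append_assoc,
      List.append_assoc] at h
    obtain ⟨G1, G', rfl, h1, h⟩ := List.append_sublist_iff.1 h
    obtain ⟨G2, G', rfl, h2, h⟩ := List.append_sublist_iff.1 h
    obtain ⟨G3, G4, rfl, h3, h⟩ := List.append_sublist_iff.1 h
    have ih' := ih (fun j => a j.succ) (fun j => Z j.succ) (fun j => b j.succ) Q G4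
      (fun j => hZ _)
      (fun H Z hH => hG H Z (hH.trans ⟨G1 ++ G2 ++ G3, [], by simp⟩)) h
    rw [List.ofFn_succ, List.flatten_cons, Fin.sum_univ_succ]
    have c1 := h1.count_le d
    have c3 := h3.count_le d
    have hz0 : (Z 0).count d = 0 := by
      rw [List.count_eq_zero]
      intro hmem
      have := hZ 0 d hmem
      simp [hd] at this
    have c2 : c * (if Good (Z 0) then 0 else 1) ≤ G2.count d := by
      split_ifs with hg
      · simp
      · simpa using hG G2 (Z 0) ⟨G1, G3 ++ G4, by simp⟩ h2 (hZ 0) hg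
    simp only [List.count_append, mul_add] at ih' ⊢
    omega

/-- contiguous pieces of a gadget -/
lemma block_of_sub {β : Type*} [DecidableEq β] (d : β) (c : ℕ) (p : β → Bool) (hd : p d = false)
    (A1 A2 B post : List β) (hA1 : A1.filter p = []) (hA2 : A2.filter p = [])
    (hB : B.filter p = []) (hpost : post.filter p = []) :
    ∀ (n : ℕ) (X : Fin n → List β) (w0 H : List β),
      H <:+: (w0 ++ ((List.ofFn fun j => A1 ++ List.replicate c d ++ A2 ++ X j ++ B).flatten
        ++ post)) →
      c ≤ H.count d ∨ H.filter p <+ w0.filter p ∨ ∃ j, H.filter p <+ X j := by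
  have hrep : ∀ L, L <:+: List.replicate c d → L.filter p = [] := by
    intro L hL
    rw [List.filter_eq_nil_iff]
    intro x hx
    have := List.eq_of_mem_replicate (hL.subset hx)
    simp [this, hd]
  intro n
  induction n with
  | zero =>
    intro X w0 H h
    right; left
    have := h.sublist.filter p
    simpa [hpost] using this
  | succ n ih =>
    intro X w0 H h
    have e : (w0 ++ ((List.ofFn fun j => A1 ++ List.replicate c d ++ A2 ++ X j ++ B).flatten
        ++ post)) = (w0 ++ A1) ++ (List.replicate c d ++ ((A2 ++ X 0 ++ B) ++
          ((List.ofFn fun j : Fin n => A1 ++ List.replicate c d ++ A2 ++ X j.succ ++ B).flatten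
        ++ post))) := by
      rw [List.ofFn_succ, List.flatten_cons]; simp [List.append_assoc]
    rw [e] at h
    have IH : ∀ H', H' <:+: ((A2 ++ X 0 ++ B) ++
          ((List.ofFn fun j : Fin n => A1 ++ List.replicate c d ++ A2 ++ X j.succ ++ B).flatten
        ++ post)) → c ≤ H'.count d ∨ ∃ j, H'.filter p <+ X j := by
      intro H' h'
      rcases ih _ _ _ h' with h1 | h1 | ⟨j, h1⟩
      · exact Or.inl h1
      · right
        refine ⟨0, ?_⟩
        simp only [List.filter_append, hA2, hB, List.nil_append, List.append_nil] at h1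
        exact h1.trans List.filter_sublist
      · exact Or.inr ⟨_, h1⟩
    rcases List.infix_append_iff.1 h with h1 | h1 | ⟨H1, H2, rfl, h1, h2⟩
    · right; left
      have := h1.sublist.filter p
      simpa [hA1] using this
    · rcases List.infix_append_iff.1 h1 with h1 | h1 | ⟨H1, H2, rfl, h1, h2⟩
      · right; left; simp [hrep _ h1]
      · rcases IH _ h1 with h | h
        · exact Or.inl h
        · exact Or.inr (Or.inr h)
      · rcases IH _ h2.isInfix with h | h
        · left; rw [List.count_append]; omega
        · right; right; rw [List.filter_append, hrep _ h1.isInfix]; exact h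
    · obtain ⟨t, ht⟩ := h2
      have hor : H2 <+: List.replicate c d ∨ List.replicate c d <+: H2 := by
        rcases List.append_eq_append_iff.1 ht with ⟨u, hu, -⟩ | ⟨u, hu, -⟩
        · exact Or.inl ⟨u, hu.symm⟩
        · exact Or.inr ⟨u, hu.symm⟩
      rcases hor with h2 | h2
      · right; left
        rw [List.filter_append, hrep _ h2.isInfix]
        have := h1.sublist.filter p
        simpa [hA1] using this
      · left
        have := h2.sublist.count_le d
        rw [List.count_replicate_self] at this
        rw [List.count_append]; omega

/-- decomposition of a subsequence of the Y gadget -/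
lemma decomp {β : Type*} (A B post : List β) :
    ∀ (m : ℕ) (Y : Fin m → List β) (T : List β),
      T <+ (List.ofFn fun j => A ++ Y j ++ B).flatten ++ post →
      ∃ (a Z b : Fin m → List β) (Q : List β),
        T = (List.ofFn fun j => a j ++ Z j ++ b j).flatten ++ Q ∧
        (∀ j, a j <+ A) ∧ (∀ j, Z j <+ Y j) ∧ (∀ j, b j <+ B) ∧ Q <+ post := by
  intro m
  induction m with
  | zero =>
    intro Y T h
    exact ⟨fun _ => [], fun _ => [], fun _ => [], T, by simp, by simp, by simp, by simp,
      by simpa using h⟩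
  | succ m ih =>
    intro Y T h
    rw [List.ofFn_succ, List.flatten_cons, List.append_assoc, List.append_assoc,
      List.append_assoc] at h
    obtain ⟨a0, T, rfl, h1, h⟩ := List.sublist_append_iff.1 h
    obtain ⟨z0, T, rfl, h2, h⟩ := List.sublist_append_iff.1 h
    obtain ⟨b0, T, rfl, h3, h⟩ := List.sublist_append_iff.1 h
    obtain ⟨a, Z, b, Q, rfl, ha, hZ, hb, hQ⟩ := ih _ _ h
    refine ⟨Fin.cons a0 a, Fin.cons z0 Z, Fin.cons b0 b, Q, ?_, ?_, ?_, ?_, hQ⟩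
    · rw [List.ofFn_succ]; simp [List.append_assoc]
    · exact Fin.cases (by simpa using h1) (by simpa using ha)
    · exact Fin.cases (by simpa using h2) (by simpa using hZ)
    · exact Fin.cases (by simpa using h3) (by simpa using hb)

lemma length_le_counts {β : Type*} [DecidableEq β] {k : ℕ} (dollar : Fin k → β) (percent : β)
    (p : β → Bool) : ∀ T : List β,
    (∀ c ∈ T, p c = true ∨ c = percent ∨ ∃ i, c = dollar i) →
    T.length ≤ ∑ i, T.count (dollar i) + T.count percent + T.countP p := by
  intro T
  induction T with
  | nil => simp
  | cons c T ih =>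
    intro h
    have ih := ih (fun x hx => h x (List.mem_cons_of_mem _ hx))
    have hle : ∑ i, T.count (dollar i) ≤ ∑ i, (c :: T).count (dollar i) :=
      Finset.sum_le_sum fun i _ => List.count_le_count_cons
    have hle2 : T.count percent ≤ (c :: T).count percent := List.count_le_count_cons
    have hle3 : T.countP p ≤ (c :: T).countP p := (List.sublist_cons_self c T).countP_le
    rw [List.length_cons]
    rcases h c (by simp) with h | rfl | ⟨i, rfl⟩
    · rw [List.countP_cons_of_pos h] at *; omega
    · rw [List.count_cons_self] at *; omega
    · have : ∑ i, T.count (dollar i) < ∑ i', (dollar i :: T).count (dollar i') :=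
        Finset.sum_lt_sum (fun i _ => List.count_le_count_cons) ⟨i, by simp, by simp⟩
      omega

/-- a row of dollar blocks -/
def row {β : Type*} (k ℓ : ℕ) (dollar : Fin k → β) (S : Fin k → Bool) : List β :=
  (List.ofFn fun j : Fin k => if S j then List.replicate (2 * ℓ) (dollar j) else []).flatten

lemma gadgetA_eq {β : Type*} (k ℓ : ℕ) (dollar : Fin k → β) :
    gadgetA k ℓ dollar = row k ℓ dollar (fun _ => true) := by
  simp [gadgetA, row]

lemma gadgetAminus_eq {β : Type*} (k ℓ : ℕ) (dollar : Fin k → β) (i : Fin k) :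
    gadgetAminus k ℓ dollar i = row k ℓ dollar (fun j => !decide (j = i)) := by
  unfold gadgetAminus row
  congr 2
  funext j
  by_cases h : j = i <;> simp [h]

lemma mem_row {β : Type*} {k ℓ : ℕ} {dollar : Fin k → β} {S : Fin k → Bool} {c : β}
    (h : c ∈ row k ℓ dollar S) : ∃ i, c = dollar i := by
  simp only [row, List.mem_flatten, List.mem_ofFn] at h
  obtain ⟨l, ⟨i, rfl⟩, hc⟩ := h
  split_ifs at hc
  · exact ⟨i, List.eq_of_mem_replicate hc⟩
  · simp at hc

lemma row_length {β : Type*} (ℓ : ℕ) : ∀ (k : ℕ) (dollar : Fin k → β) (S : Fin k → Bool),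
    (row k ℓ dollar S).length = ∑ i, if S i then 2 * ℓ else 0 := by
  intro k dollar S
  simp only [row, List.length_flatten, List.map_ofFn, List.sum_ofFn]
  refine Finset.sum_congr rfl fun i _ => ?_
  by_cases h : S i <;> simp [h]

lemma row_count {β : Type*} [DecidableEq β] (k ℓ : ℕ) (dollar : Fin k → β) (S : Fin k → Bool)
    (hinj : Function.Injective dollar) (i : Fin k) :
    (row k ℓ dollar S).count (dollar i) = if S i then 2 * ℓ else 0 := by
  simp only [row, List.count_flatten, List.map_ofFn, List.sum_ofFn]
  rw [Finset.sum_eq_single i]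
  · by_cases h : S i <;> simp [h]
  · intro j _ hj
    by_cases h : S j
    · simp [h, List.count_replicate, hinj.eq_iff, hj]
    · simp [h]
  · simp

lemma row_sub {β : Type*} (ℓ : ℕ) : ∀ (k : ℕ) (dollar : Fin k → β) (S S' : Fin k → Bool),
    (∀ i, S i = true → S' i = true) → row k ℓ dollar S <+ row k ℓ dollar S' := by
  intro k
  induction k with
  | zero => intros; simp [row]
  | succ k ih =>
    intro dollar S S' h
    unfold row
    rw [List.ofFn_succ, List.ofFn_succ, List.flatten_cons, List.flatten_cons]
    refine List.Sublist.append ?_ (ih (fun i => dollar i.succ) (fun i => S i.succ)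
      (fun i => S' i.succ) fun i => h _)
    by_cases h0 : S 0
    · simp [h0, h 0 h0]
    · simp [h0]

lemma gadgetA_split {β : Type*} (k ℓ : ℕ) (dollar : Fin k → β) (i : Fin k) :
    ∃ A1 A2, gadgetA k ℓ dollar = A1 ++ List.replicate (2 * ℓ) (dollar i) ++ A2 := by
  have : List.replicate (2 * ℓ) (dollar i) ∈
      List.ofFn fun j : Fin k => List.replicate (2 * ℓ) (dollar j) := by
    rw [List.mem_ofFn]; exact ⟨i, rfl⟩
  obtain ⟨l1, l2, h⟩ := List.append_of_mem this
  refine ⟨l1.flatten, l2.flatten, ?_⟩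
  rw [gadgetA, h]; simp

/-- concatenation of `g 0, ..., g (n-1)` -/
def blk {β : Type*} (g : ℕ → List β) (n : ℕ) : List β := ((List.range n).map g).flatten

lemma blk_add {β : Type*} (g : ℕ → List β) (a b : ℕ) :
    blk g (a + b) = blk g a ++ blk (fun r => g (a + r)) b := by
  simp [blk, List.range_add, Function.comp_def]

lemma blk_succ {β : Type*} (g : ℕ → List β) (a : ℕ) :
    blk g (a + 1) = blk g a ++ g a := by
  simp [blk, List.range_succ]

lemma blk_sub {β : Type*} (g h : ℕ → List β) (n : ℕ) (H : ∀ r < n, g r <+ h r) :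
    blk g n <+ blk h n := by
  induction n with
  | zero => simp [blk]
  | succ n ih =>
    rw [blk_succ, blk_succ]
    exact (ih fun r hr => H r (by omega)).append (H n (by omega))

lemma blk_length {β : Type*} (g : ℕ → List β) (n : ℕ) :
    (blk g n).length = ∑ r ∈ Finset.range n, (g r).length := by
  induction n with
  | zero => simp [blk]
  | succ n ih => rw [blk_succ, Finset.sum_range_succ, List.length_append, ih]

lemma strPow_eq {β : Type*} (W : List β) (f : ℕ) : strPow W f = blk (fun _ => W) f := by
  simp [strPow, blk, List.map_const']

lemma ofFn_blk {β : Type*} (n : ℕ) (g : ℕ → List β) :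
    (List.ofFn fun j : Fin n => g j).flatten = blk g n := by
  induction n with
  | zero => simp [blk]
  | succ n ih =>
    rw [blk_succ, List.ofFn_succ', List.concat_eq_append, List.flatten_append]
    simp only [Fin.val_castSucc, Fin.val_last]
    rw [ih]; simp

lemma row_filter {β : Type*} {k ℓ : ℕ} {dollar : Fin k → β} {S : Fin k → Bool} (p : β → Bool)
    (hdp : ∀ i, p (dollar i) = false) : (row k ℓ dollar S).filter p = [] := by
  rw [List.filter_eq_nil_iff]
  intro c hc
  obtain ⟨i, rfl⟩ := mem_row hc
  simp [hdp]

lemma mem_strPow {β : Type*} {W : List β} {f : ℕ} {c : β} (h : c ∈ strPow W f) : c ∈ W := by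
  simp only [strPow, List.mem_flatten, List.mem_replicate] at h
  obtain ⟨l, ⟨_, rfl⟩, hc⟩ := h
  exact hc

lemma count_strPow {β : Type*} [DecidableEq β] (W : List β) (f : ℕ) (c : β) :
    (strPow W f).count c = f * W.count c := by
  simp [strPow, List.count_flatten]

lemma count_AG_dollar {β : Type*} [DecidableEq β] (k ℓ f n : ℕ) (dollar : Fin k → β)
    (percent : β) (p : β → Bool) (hinj : Function.Injective dollar)
    (hdp : ∀ i, p (dollar i) = false) (hdpc : ∀ i, dollar i ≠ percent) (i : Fin k)
    (X : Fin n → List β) (hX : ∀ j, ∀ c ∈ X j, p c = true) :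
    (gadgetAG k ℓ dollar percent i f X).count (dollar i) = 2 * ℓ * n := by
  have h0 : ∀ j, (X j).count (dollar i) = 0 := by
    intro j
    rw [List.count_eq_zero]
    intro h
    have := hX j _ h
    simp [hdp] at this
  simp only [gadgetAG, List.count_append, count_strPow, gadgetAminus_eq, gadgetA_eq,
    row_count k ℓ dollar _ hinj, List.count_flatten, List.map_ofFn, List.sum_ofFn,
    Function.comp_def, h0, List.count_replicate]
  simp [(hdpc i).symm, mul_comm]

lemma count_AG_percent {β : Type*} [DecidableEq β] (k ℓ f n : ℕ) (dollar : Fin k → β)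
    (percent : β) (p : β → Bool)
    (hpp : p percent = false) (hdpc : ∀ i, dollar i ≠ percent) (i : Fin k)
    (X : Fin n → List β) (hX : ∀ j, ∀ c ∈ X j, p c = true) :
    (gadgetAG k ℓ dollar percent i f X).count percent = 2 * ℓ * n := by
  have h0 : ∀ j, (X j).count percent = 0 := by
    intro j
    rw [List.count_eq_zero]
    intro h
    have := hX j _ h
    simp [hpp] at this
  have h1 : ∀ S, (row k ℓ dollar S).count percent = 0 := by
    intro S
    rw [List.count_eq_zero]
    intro h
    obtain ⟨i, hi⟩ := mem_row h
    exact hdpc i hi.symm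
  simp only [gadgetAG, List.count_append, count_strPow, gadgetAminus_eq, gadgetA_eq,
    List.count_flatten, List.map_ofFn, List.sum_ofFn, h1,
    Function.comp_def, h0, List.count_replicate]
  simp [mul_comm]

lemma mem_AG {β : Type*} {k ℓ f n : ℕ} {dollar : Fin k → β}
    {percent : β} (p : β → Bool) {i : Fin k}
    {X : Fin n → List β} (hX : ∀ j, ∀ c ∈ X j, p c = true) {c : β}
    (h : c ∈ gadgetAG k ℓ dollar percent i f X) :
    p c = true ∨ c = percent ∨ ∃ i, c = dollar i := by
  simp only [gadgetAG, gadgetAminus_eq, gadgetA_eq, List.mem_append, List.mem_flatten,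
    List.mem_ofFn] at h
  rcases h with (h | ⟨l, ⟨j, rfl⟩, h⟩) | h
  · exact Or.inr (Or.inr (mem_row (mem_strPow h)))
  · simp only [List.mem_append] at h
    rcases h with (h | h) | h
    · exact Or.inr (Or.inr (mem_row h))
    · exact Or.inl (hX j c h)
    · exact Or.inr (Or.inl (List.eq_of_mem_replicate h))
  · exact Or.inr (Or.inr (mem_row (mem_strPow h)))

lemma upper {β : Type*} [DecidableEq β] (K ℓ f m n : ℕ) (hn : 0 < n) (p : β → Bool)
    (X : Fin K → Fin n → List β) (Y : Fin m → List β)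
    (hYlen : ∀ j, (Y j).length = ℓ)
    (hX : ∀ i j, ∀ c ∈ X i j, p c = true) (hY : ∀ j, ∀ c ∈ Y j, p c = true)
    (dollar : Fin (K + 1) → β) (percent : β) (hinj : Function.Injective dollar)
    (hdpc : ∀ i, dollar i ≠ percent) (hdp : ∀ i, p (dollar i) = false)
    (hpp : p percent = false) (w : Fin m → ℕ)
    (hw : ∀ (idx : Fin K → Fin n) (j : Fin m),
      lcsLen ((List.ofFn fun q => X q (idx q)) ++ [Y j]) ≤ w j)
    (T : List β)
    (hTX : ∀ i, T <+ gadgetAG (K + 1) ℓ dollar percent i.castSucc f (X i))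
    (hTY : T <+ gadgetAG (K + 1) ℓ dollar percent (Fin.last K) f Y) :
    T.length ≤ 2 * ℓ * (2 * m + K * n) + ∑ j, w j := by
  classical
  have hlen := length_le_counts dollar percent p T
    (fun c hc => mem_AG p hY (hTY.subset hc))
  have c1 := hTY.count_le percent
  rw [count_AG_percent (K+1) ℓ f m dollar percent p hpp hdpc _ Y hY] at c1
  have c2 := hTY.count_le (dollar (Fin.last K))
  rw [count_AG_dollar (K+1) ℓ f m dollar percent p hinj hdp hdpc _ Y hY] at c2
  rw [Fin.sum_univ_castSucc] at hlen
  have hpow : ∀ i, (strPow (gadgetAminus (K+1) ℓ dollar i) f).filter p = [] := by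
    intro i
    rw [List.filter_eq_nil_iff]
    intro c hc
    have := mem_strPow hc
    rw [gadgetAminus_eq] at this
    obtain ⟨i, rfl⟩ := mem_row this
    simp [hdp]
  have hA : (gadgetA (K+1) ℓ dollar).filter p = [] := by
    rw [gadgetA_eq]; exact row_filter p hdp
  have hB : (List.replicate (2 * ℓ) percent).filter p = [] := by
    rw [List.filter_eq_nil_iff]
    intro c hc
    simp [List.eq_of_mem_replicate hc, hpp]
  -- decomposition
  have hTY' := hTY
  rw [gadgetAG, List.append_assoc] at hTY'
  obtain ⟨P, T', hT, hP, h'⟩ := List.sublist_append_iff.1 hTY'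
  obtain ⟨a, Z, b, Q, rfl, ha, hZ, hb, hQ⟩ := decomp _ _ _ _ _ _ h'
  have hnil : ∀ L M : List β, L <+ M → M.filter p = [] → L.countP p = 0 := by
    intro L M h1 h2
    have := h1.filter p
    rw [h2, List.sublist_nil] at this
    rw [List.countP_eq_length_filter, this]; rfl
  have hsig : T.countP p = ∑ j, (Z j).length := by
    rw [hT]
    simp only [List.countP_append, List.countP_flatten, List.map_ofFn, List.sum_ofFn,
      Function.comp_def]
    rw [hnil _ _ hP (hpow _), hnil _ _ hQ (hpow _)]
    simp only [zero_add, add_zero]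
    refine Finset.sum_congr rfl fun j _ => ?_
    rw [hnil _ _ (ha j) hA, hnil _ _ (hb j) hB, zero_add, add_zero, List.countP_eq_length]
    exact fun c hc => hY j c ((hZ j).subset hc)
  -- per string bound
  have key : ∀ i : Fin K, T.count (dollar i.castSucc) +
      2 * ℓ * ∑ j, (if ∃ q, Z j <+ X i q then 0 else 1) ≤ 2 * ℓ * n := by
    intro i
    have hcount := count_AG_dollar (K+1) ℓ f n dollar percent p hinj hdp hdpc i.castSucc
      (X i) (hX i)
    obtain ⟨A1, A2, hsplit⟩ := gadgetA_split (K+1) ℓ dollar i.castSucc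
    have hA' := hA
    rw [hsplit] at hA'
    simp only [List.filter_append, List.append_eq_nil_iff] at hA'
    obtain ⟨⟨hA1, -⟩, hA2⟩ := hA'
    have hGood : ∀ H Z, H <:+: gadgetAG (K + 1) ℓ dollar percent i.castSucc f (X i) → Z <+ H →
        (∀ x ∈ Z, p x = true) → ¬ (∃ q, Z <+ X i q) → 2 * ℓ ≤ H.count (dollar i.castSucc) := by
      intro H Z hH hZH hZp hbad
      rw [gadgetAG, hsplit, List.append_assoc] at hH
      have hZf : Z <+ H.filter p := by
        have := hZH.filter p
        rwa [List.filter_eq_self.2 hZp] at this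
      rcases block_of_sub (dollar i.castSucc) (2 * ℓ) p (hdp _) A1 A2 _ _ hA1 hA2 hB
        (hpow i.castSucc) n (X i) _ H hH with h | h | ⟨q, h⟩
      · exact h
      · rw [hpow] at h
        have := hZf.trans h
        rw [List.sublist_nil] at this
        exact absurd ⟨⟨0, hn⟩, by simp [this]⟩ hbad
      · exact absurd ⟨q, hZf.trans h⟩ hbad
    have hsub := hTX i
    rw [hT] at hsub
    obtain ⟨G1, G2, hG, h1, h2⟩ := List.append_sublist_iff.1 hsub
    have hs := seg_count (dollar i.castSucc) (2 * ℓ) p (fun Z => ∃ q, Z <+ X i q) (hdp _)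
      m a Z b Q G2 (fun j x hx => hY j x ((hZ j).subset hx))
      (fun H Z hH => hGood H Z (hH.trans (by rw [hG]; exact ⟨G1, [], by simp⟩))) h2
    have h1c := h1.count_le (dollar i.castSucc)
    rw [hG, List.count_append] at hcount
    have : T.count (dollar i.castSucc) = P.count (dollar i.castSucc) +
      ((List.ofFn fun j => a j ++ Z j ++ b j).flatten ++ Q).count (dollar i.castSucc) := by
        rw [hT, List.count_append]
    omega
  have hZw : ∀ j, (Z j).length ≤ w j +
      2 * ℓ * ∑ i : Fin K, (if ∃ q, Z j <+ X i q then 0 else 1) := by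
    intro j
    by_cases h : ∀ i, ∃ q, Z j <+ X i q
    · choose idx hidx using h
      refine le_trans ?_ (Nat.le_add_right _ _)
      refine le_trans (le_lcsLen _ (Y j) (by simp) (Z j) ?_) (hw idx j)
      intro s hs
      simp only [List.mem_append, List.mem_ofFn, List.mem_singleton] at hs
      rcases hs with ⟨q, rfl⟩ | rfl
      · exact hidx q
      · exact hZ j
    · push Not at h
      obtain ⟨i, hi⟩ := h
      have h1 : 1 ≤ ∑ i : Fin K, (if ∃ q, Z j <+ X i q then 0 else 1) := by
        have := Finset.single_le_sum (f := fun i : Fin K => if ∃ q, Z j <+ X i q then 0 else 1)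
          (fun _ _ => Nat.zero_le _) (Finset.mem_univ i)
        rw [if_neg (by push Not; exact hi)] at this
        exact this
      have h2 := (hZ j).length_le
      rw [hYlen] at h2
      nlinarith
  have s1 := Finset.sum_le_sum fun (i : Fin K) (_ : i ∈ Finset.univ) => key i
  have s2 := Finset.sum_le_sum fun (j : Fin m) (_ : j ∈ Finset.univ) => hZw j
  rw [Finset.sum_add_distrib, ← Finset.mul_sum] at s1 s2
  rw [Finset.sum_comm] at s2
  simp only [Finset.sum_const, Finset.card_univ, Fintype.card_fin, smul_eq_mul] at s1
  rw [hsig] at hlen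
  have e : 2 * ℓ * (2 * m + K * n) = 2 * ℓ * m + 2 * ℓ * m + K * (2 * ℓ * n) := by ring
  rw [e]
  omega

lemma AG_blk {β : Type*} (k ℓ : ℕ) (dollar : Fin k → β) (percent : β)
    (i : Fin k) (f n : ℕ) (X : Fin n → List β) :
    gadgetAG k ℓ dollar percent i f X =
      blk (fun _ => gadgetAminus k ℓ dollar i) f ++
      blk (fun j => gadgetA k ℓ dollar ++ (if h : j < n then X ⟨j, h⟩ else [])
        ++ List.replicate (2 * ℓ) percent) n ++
      blk (fun _ => gadgetAminus k ℓ dollar i) f := by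
  rw [gadgetAG, strPow_eq, ← ofFn_blk n]
  simp

lemma lower {β : Type*} (K ℓ f m n : ℕ) (hf : n = f + m)
    (X : Fin K → Fin n → List β) (Y : Fin m → List β)
    (dollar : Fin (K + 1) → β) (percent : β) (Δ : Fin K → ℕ) (hΔ : ∀ i, Δ i ≤ f)
    (Z : ℕ → List β)
    (hZX : ∀ i, ∀ j (_ : j < m) (h' : Δ i + j < n), Z j <+ X i ⟨Δ i + j, h'⟩)
    (hZY : ∀ j (h : j < m), Z j <+ Y ⟨j, h⟩) :
    ∃ T : List β, T.length = 2 * ℓ * (2 * m + K * n) + ∑ j ∈ Finset.range m, (Z j).length ∧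
      (∀ i, T <+ gadgetAG (K + 1) ℓ dollar percent i.castSucc f (X i)) ∧
      T <+ gadgetAG (K + 1) ℓ dollar percent (Fin.last K) f Y := by
  let sP : ℕ → Fin (K + 1) → Bool := fun r =>
    Fin.lastCases false (fun i => decide (f - Δ i ≤ r))
  let sQ : ℕ → Fin (K + 1) → Bool := fun r =>
    Fin.lastCases false (fun i => decide (r < f - Δ i))
  have sP0 : ∀ r, sP r (Fin.last K) = false := fun r => by simp [sP]
  have sQ0 : ∀ r, sQ r (Fin.last K) = false := fun r => by simp [sQ]
  have sP1 : ∀ r i, sP r (Fin.castSucc i) = decide (f - Δ i ≤ r) := fun r i => by simp [sP]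
  have sQ1 : ∀ r i, sQ r (Fin.castSucc i) = decide (r < f - Δ i) := fun r i => by simp [sQ]
  let R := row (K + 1) ℓ dollar
  let M : ℕ → List β := fun j => gadgetA (K+1) ℓ dollar ++ Z j ++ List.replicate (2 * ℓ) percent
  have hRA : ∀ S U V, R S <+ gadgetA (K+1) ℓ dollar ++ U ++ V := by
    intro S U V
    rw [gadgetA_eq, List.append_assoc]
    exact (row_sub ℓ _ dollar _ _ (by simp)).trans (List.sublist_append_left _ _)
  have hRm : ∀ S i, S i = false → R S <+ gadgetAminus (K+1) ℓ dollar i := by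
    intro S i h
    rw [gadgetAminus_eq]
    refine row_sub ℓ _ dollar _ _ fun j hj => ?_
    have : j ≠ i := by rintro rfl; simp [h] at hj
    simp [this]
  refine ⟨blk (fun r => R (sP r)) f ++ blk M m ++ blk (fun r => R (sQ r)) f, ?_, ?_, ?_⟩
  · simp only [List.length_append, blk_length]
    have h1 : ∑ r ∈ Finset.range f, (R (sP r)).length + ∑ r ∈ Finset.range f, (R (sQ r)).length
        = f * (2 * ℓ * K) := by
      rw [← Finset.sum_add_distrib]
      have : ∀ r ∈ Finset.range f, (R (sP r)).length + (R (sQ r)).length = 2 * ℓ * K := by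
        intro r _
        simp only [R, row_length]
        rw [Fin.sum_univ_castSucc, Fin.sum_univ_castSucc]
        simp only [sP0, sQ0, sP1, sQ1]
        simp only [Bool.false_eq_true, if_false, add_zero, decide_eq_true_eq]
        rw [← Finset.sum_add_distrib]
        have : ∀ i ∈ (Finset.univ : Finset (Fin K)), ((if f - Δ i ≤ r then 2 * ℓ else 0) +
            if r < f - Δ i then 2 * ℓ else 0) = 2 * ℓ := by
          intro i _
          split_ifs <;> omega
        rw [Finset.sum_congr rfl this]
        simp [mul_comm]
      rw [Finset.sum_congr rfl this]
      simp
    have h2 : ∑ j ∈ Finset.range m, (M j).length =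
        m * (2 * ℓ * (K + 2)) + ∑ j ∈ Finset.range m, (Z j).length := by
      have : ∀ j ∈ Finset.range m, (M j).length = 2 * ℓ * (K + 2) + (Z j).length := by
        intro j _
        simp only [M, List.length_append, gadgetA_eq, row_length, List.length_replicate]
        simp
        ring
      rw [Finset.sum_congr rfl this, Finset.sum_add_distrib]
      simp
    rw [h2]
    subst hf
    have e : 2 * ℓ * (2 * m + K * (f + m)) = f * (2 * ℓ * K) + m * (2 * ℓ * (K + 2)) := by ring
    rw [e]
    omega
  · intro i
    have hi := hΔ i
    rw [AG_blk]
    set G : ℕ → List β := fun j => gadgetA (K+1) ℓ dollar ++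
      (if h : j < n then X i ⟨j, h⟩ else []) ++ List.replicate (2 * ℓ) percent with hGdef
    have en : n = Δ i + (m + (f - Δ i)) := by omega
    have ef : f = (f - Δ i) + Δ i := by omega
    have eG : blk G n = blk G (Δ i) ++ (blk (fun j => G (Δ i + j)) m ++
        blk (fun r => G (Δ i + (m + r))) (f - Δ i)) := by
      conv_lhs => rw [en]
      rw [blk_add, blk_add]
    have hle : ∀ (g : ℕ → List β) (a : ℕ), a ≤ f → blk g a <+ blk g f := by
      intro g a ha
      obtain ⟨b, rfl⟩ := Nat.exists_eq_add_of_le ha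
      rw [blk_add]
      exact List.sublist_append_left _ _
    have hP : blk (fun r => R (sP r)) f <+
        blk (fun _ => gadgetAminus (K+1) ℓ dollar i.castSucc) f ++ blk G (Δ i) := by
      have e : blk (fun r => R (sP r)) f = blk (fun r => R (sP r)) (f - Δ i) ++
          blk (fun r => R (sP (f - Δ i + r))) (Δ i) := by
        conv_lhs => rw [ef]
        rw [blk_add]
      rw [e]
      refine List.Sublist.append ?_ ?_
      · refine (blk_sub _ _ _ fun r hr => ?_).trans (hle _ (f - Δ i) (by omega))
        exact hRm _ _ (by rw [sP1, decide_eq_false_iff_not]; omega)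
      · exact blk_sub _ _ _ fun r hr => hRA _ _ _
    have hQ : blk (fun r => R (sQ r)) f <+ blk (fun r => G (Δ i + (m + r))) (f - Δ i) ++
        blk (fun _ => gadgetAminus (K+1) ℓ dollar i.castSucc) f := by
      have e : blk (fun r => R (sQ r)) f = blk (fun r => R (sQ r)) (f - Δ i) ++
          blk (fun r => R (sQ (f - Δ i + r))) (Δ i) := by
        conv_lhs => rw [ef]
        rw [blk_add]
      rw [e]
      refine List.Sublist.append ?_ ?_
      · exact blk_sub _ _ _ fun r hr => hRA _ _ _
      · refine (blk_sub _ _ _ fun r hr => ?_).trans (hle _ (Δ i) hi)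
        exact hRm _ _ (by rw [sQ1]; simp)
    have hM : blk M m <+ blk (fun j => G (Δ i + j)) m := by
      refine blk_sub _ _ _ fun j hj => ?_
      have hlt : Δ i + j < n := by omega
      simp only [hGdef, M, dif_pos hlt]
      exact ((List.Sublist.refl _).append (hZX i j hj hlt)).append (List.Sublist.refl _)
    rw [eG]
    have := (hP.append hM).append hQ
    simpa only [List.append_assoc] using this
  · rw [AG_blk]
    refine ((blk_sub _ _ _ fun r _ => hRm _ _ (sP0 r)).append
      (blk_sub _ _ _ fun j hj => ?_)).append (blk_sub _ _ _ fun r _ => hRm _ _ (sQ0 r))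
    simp only [M, dif_pos hj]
    exact ((List.Sublist.refl _).append (hZY j hj)).append (List.Sublist.refl _)

/-- A common subsequence of the selected gadgets either has length at most `D - 1`
or is a common subsequence of the alignment gadgets. -/
lemma at_split {β : Type*} (atS : β) (N : ℕ) (G1 G2 T : List β) (h1 : atS ∉ G1)
    (hT1 : T <+ List.replicate N atS ++ G1) (hT2 : T <+ G2 ++ List.replicate N atS)
    (hG2 : atS ∉ G2) : T.length ≤ N ∨ atS ∉ T := by
  classical
  by_cases hmem : atS ∈ T
  · left
    obtain ⟨S1, S2, rfl⟩ := List.append_of_mem hmem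
    -- everything before is atS
    have a1 : ∀ x ∈ S1, x = atS := by
      obtain ⟨L1, L2, e, hL1, hL2⟩ := List.sublist_append_iff.1 hT1
      intro x hx
      rcases List.append_eq_append_iff.1 e with ⟨t, rfl, h⟩ | ⟨t, h, h'⟩
      · exact List.eq_of_mem_replicate (hL1.subset (List.mem_append_left _ hx))
      · cases t with
        | nil =>
          simp only [List.append_nil] at h
          subst h
          exact List.eq_of_mem_replicate (hL1.subset hx)
        | cons b t =>
          refine absurd (hL2.subset ?_) h1
          rw [h']; simp
    have a2 : ∀ x ∈ S2, x = atS := by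
      obtain ⟨L1, L2, e, hL1, hL2⟩ := List.sublist_append_iff.1 hT2
      intro x hx
      rcases List.append_eq_append_iff.1 e with ⟨t, rfl, h⟩ | ⟨t, h, h'⟩
      · cases t with
        | nil =>
          simp only [List.nil_append] at h
          exact List.eq_of_mem_replicate (hL2.subset (by rw [← h]; simp [hx]))
        | cons b t =>
          refine absurd (hL1.subset ?_) hG2
          simp only [List.cons_append, List.cons.injEq] at h
          simp [h.1]
      · exact List.eq_of_mem_replicate (hL2.subset (by rw [h']; simp [hx]))
    have hall : ∀ x ∈ S1 ++ atS :: S2, atS = x := by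
      intro x hx
      simp only [List.mem_append, List.mem_cons] at hx
      rcases hx with h | h | h
      · exact (a1 x h).symm
      · exact h.symm
      · exact (a2 x h).symm
    have := hT1.count_le atS
    rw [List.count_eq_length.2 hall, List.count_append, List.count_replicate_self,
      List.count_eq_zero.2 h1] at this
    simpa using this
  · exact Or.inr hmem

lemma sub_of_notMem_left {β : Type*} (c : β) (N : ℕ) (G T : List β) (h : c ∉ T)
    (hT : T <+ List.replicate N c ++ G) : T <+ G := by
  obtain ⟨L1, L2, rfl, hL1, hL2⟩ := List.sublist_append_iff.1 hT
  cases L1 with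
  | nil => simpa using hL2
  | cons b L =>
    have := List.eq_of_mem_replicate (hL1.subset (List.mem_cons_self))
    simp [this] at h

lemma sub_of_notMem_right {β : Type*} (c : β) (N : ℕ) (G T : List β) (h : c ∉ T)
    (hT : T <+ G ++ List.replicate N c) : T <+ G := by
  obtain ⟨L1, L2, rfl, hL1, hL2⟩ := List.sublist_append_iff.1 hT
  cases L2 with
  | nil => simpa using hL1
  | cons b L =>
    have := List.eq_of_mem_replicate (hL2.subset (List.mem_cons_self))
    simp [this] at h

end BAG

/-- basic alignment gadget, Theorem `BasicAlignment`. -/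
theorem basic_alignment_gadget
    {β : Type*} (k ℓ m n : ℕ) (hk : 2 ≤ k) (hℓ : 1 ≤ ℓ) (hm : 1 ≤ m) (hmn : m < n)
    (Sig : Set β)
    (X : Fin (k - 1) → Fin n → List β) (Y : Fin m → List β)
    (hXlen : ∀ i j, (X i j).length = ℓ) (hYlen : ∀ j, (Y j).length = ℓ)
    (hXin : ∀ i j, ∀ c ∈ X i j, c ∈ Sig) (hYin : ∀ j, ∀ c ∈ Y j, c ∈ Sig)
    (dollar : Fin k → β) (percent atSym : β)
    (hdinj : Function.Injective dollar)
    (hdp : ∀ i, dollar i ≠ percent) (hda : ∀ i, dollar i ≠ atSym) (hpa : percent ≠ atSym)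
    (hdS : ∀ i, dollar i ∉ Sig) (hpS : percent ∉ Sig) (haS : atSym ∉ Sig)
    (z : ℕ)
    (hz : ∀ (idx : Fin (k - 1) → Fin n) (jy : Fin m),
      lcsLen ((List.ofFn fun p => X p (idx p)) ++ [Y jy]) = z ∨
      lcsLen ((List.ofFn fun p => X p (idx p)) ++ [Y jy]) = z + 1)
    (D : ℕ) (hD : D = 2 * ℓ * (2 * m + (k - 1) * n) + z * m + 1) :
    ((∃ t : (Fin (k - 1) → Fin n) × Fin m,
        (lcsLen ((List.ofFn fun p => X p (t.1 p)) ++ [Y t.2]) = z + 1) ∧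
        (∀ t' : (Fin (k - 1) → Fin n) × Fin m,
          lcsLen ((List.ofFn fun p => X p (t'.1 p)) ++ [Y t'.2]) = z + 1 → t' = t) ∧
        (∃ Δ : Fin (k - 1) → ℕ, (∀ p, Δ p ≤ n - m) ∧
          ∀ p, (t.1 p : ℕ) = Δ p + (t.2 : ℕ))) →
      lcsLen
        ((List.ofFn fun i : Fin (k - 1) =>
            gadgetSAGx k ℓ dollar percent atSym D (i.castLE (Nat.sub_le k 1)) (n - m) (X i))
          ++ [gadgetSAGy k ℓ dollar percent atSym D ⟨k - 1, by omega⟩ (n - m) Y]) = D) ∧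
    ((∀ t : (Fin (k - 1) → Fin n) × Fin m,
        lcsLen ((List.ofFn fun p => X p (t.1 p)) ++ [Y t.2]) ≠ z + 1) →
      lcsLen
        ((List.ofFn fun i : Fin (k - 1) =>
            gadgetSAGx k ℓ dollar percent atSym D (i.castLE (Nat.sub_le k 1)) (n - m) (X i))
          ++ [gadgetSAGy k ℓ dollar percent atSym D ⟨k - 1, by omega⟩ (n - m) Y]) = D - 1) := by
  classical
  obtain ⟨K, rfl⟩ : ∃ K, k = K + 1 := ⟨k - 1, by omega⟩
  change Fin K → Fin n → List β at X
  set N := 2 * ℓ * (2 * m + K * n) + z * m with hN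
  have hDN : D = N + 1 := hD
  clear_value N
  subst hDN
  let p : β → Bool := fun c => decide (c ∈ Sig)
  have hXp : ∀ i j, ∀ c ∈ X i j, p c = true := fun i j c hc => by simpa [p] using hXin i j c hc
  have hYp : ∀ j, ∀ c ∈ Y j, p c = true := fun j c hc => by simpa [p] using hYin j c hc
  have hdp' : ∀ i, p (dollar i) = false := fun i => by simpa [p] using hdS i
  have hpp : p percent = false := by simpa [p] using hpS
  have hap : p atSym = false := by simpa [p] using haS
  have hcast : ∀ i : Fin K, i.castLE (Nat.sub_le (K + 1) 1) = i.castSucc := fun i => rfl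
  have hlast : (⟨K + 1 - 1, by omega⟩ : Fin (K + 1)) = Fin.last K := rfl
  have hatAG : ∀ {r : ℕ} (i : Fin (K + 1)) (W : Fin r → List β), (∀ j, ∀ c ∈ W j, p c = true) →
      atSym ∉ gadgetAG (K + 1) ℓ dollar percent i (n - m) W := by
    intro r i W hW hmem
    rcases BAG.mem_AG p hW hmem with h | h | ⟨i, h⟩
    · simp [hap] at h
    · exact hpa h.symm
    · exact hda i h.symm
  let F : List (List β) := (List.ofFn fun i : Fin K =>
            gadgetSAGx (K + 1) ℓ dollar percent atSym (N + 1) i.castSucc (n - m) (X i))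
          ++ [gadgetSAGy (K + 1) ℓ dollar percent atSym (N + 1) (Fin.last K) (n - m) Y]
  have hYF : gadgetSAGy (K + 1) ℓ dollar percent atSym (N + 1) (Fin.last K) (n - m) Y ∈ F := by
    simp [F]
  have hXF : ∀ i : Fin K,
      gadgetSAGx (K + 1) ℓ dollar percent atSym (N + 1) i.castSucc (n - m) (X i) ∈ F := by
    intro i
    simp only [F, List.mem_append, List.mem_ofFn]
    exact Or.inl ⟨i, rfl⟩
  have hFall : ∀ T : List β, (∀ i : Fin K,
      T.Sublist (gadgetSAGx (K + 1) ℓ dollar percent atSym (N + 1) i.castSucc (n - m) (X i))) →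
      T.Sublist (gadgetSAGy (K + 1) ℓ dollar percent atSym (N + 1) (Fin.last K) (n - m) Y) →
      ∀ s ∈ F, T.Sublist s := by
    intro T h1 h2 s hs
    simp only [F, List.mem_append, List.mem_ofFn, List.mem_singleton] at hs
    rcases hs with ⟨i, rfl⟩ | rfl
    · exact h1 i
    · exact h2
  have hup : ∀ w : Fin m → ℕ, (∀ (idx : Fin K → Fin n) (j : Fin m),
      lcsLen ((List.ofFn fun q => X q (idx q)) ++ [Y j]) ≤ w j) → z * m ≤ ∑ j, w j →
      lcsLen F ≤ 2 * ℓ * (2 * m + K * n) + ∑ j, w j := by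
    intro w hw hzw
    refine BAG.lcsLen_le _ _ fun T hT => ?_
    have hTY := hT _ hYF
    have hTX := fun i => hT _ (hXF i)
    simp only [gadgetSAGx, gadgetSAGy, Nat.add_sub_cancel] at hTX hTY
    rcases BAG.at_split atSym N _ _ T (hatAG _ _ (hXp ⟨0, by omega⟩)) (hTX ⟨0, by omega⟩) hTY
      (hatAG _ _ hYp) with h | h
    · omega
    · exact BAG.upper K ℓ (n - m) m n (by omega) p X Y hYlen hXp hYp dollar percent hdinj hdp hdp'
        hpp w hw T (fun i => BAG.sub_of_notMem_left _ _ _ _ h (hTX i))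
        (BAG.sub_of_notMem_right _ _ _ _ h hTY)
  have goalF : ∀ b, lcsLen F = b → lcsLen
        ((List.ofFn fun i : Fin (K + 1 - 1) =>
            gadgetSAGx (K + 1) ℓ dollar percent atSym (N + 1)
              (i.castLE (Nat.sub_le (K + 1) 1)) (n - m) (X i))
          ++ [gadgetSAGy (K + 1) ℓ dollar percent atSym (N + 1) ⟨K + 1 - 1, by omega⟩
            (n - m) Y]) = b := fun b hb => hb
  constructor
  · rintro ⟨⟨t1, t2⟩, ht, huniq, Δ, hΔ, htΔ⟩
    change Fin K → ℕ at Δ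
    change Fin K → Fin n at t1
    refine goalF _ (le_antisymm ?_ ?_)
    · have hs : ∑ j : Fin m, (z + if j = t2 then 1 else 0) = z * m + 1 := by
        rw [Finset.sum_add_distrib]; simp [mul_comm]
      have := hup (fun j => z + if j = t2 then 1 else 0) ?_ (by omega)
      · omega
      · intro idx j
        rcases hz idx j with h | h
        · exact le_of_eq_of_le h (Nat.le_add_right _ _)
        · have h2 := huniq (idx, j) h
          have : j = t2 := congrArg Prod.snd h2
          simp only [this, if_true]
          rw [this] at h
          exact h.le
    · have hlt : ∀ (i : Fin K) (j : ℕ), j < m → Δ i + j < n := by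
        intro i j hj
        have := hΔ i
        omega
      have hex : ∀ j : ℕ, ∃ Zj : List β, ∀ h : j < m,
          Zj.length = lcsLen ((List.ofFn fun q : Fin K => X q ⟨Δ q + j, hlt q j h⟩)
            ++ [Y ⟨j, h⟩]) ∧
          (∀ i : Fin K, Zj.Sublist (X i ⟨Δ i + j, hlt i j h⟩)) ∧ Zj.Sublist (Y ⟨j, h⟩) := by
        intro j
        by_cases h : j < m
        · obtain ⟨Zj, h1, h2⟩ := BAG.exists_lcs
            ((List.ofFn fun q : Fin K => X q ⟨Δ q + j, hlt q j h⟩) ++ [Y ⟨j, h⟩]) (Y ⟨j, h⟩)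
            (by simp)
          refine ⟨Zj, fun _ => ⟨h1, fun i => h2 _ ?_, h2 _ (by simp)⟩⟩
          simp only [List.mem_append, List.mem_ofFn]
          exact Or.inl ⟨i, rfl⟩
        · exact ⟨[], fun h' => absurd h' h⟩
      choose Z hZ using hex
      obtain ⟨T, hTl, hTX, hTY⟩ := BAG.lower K ℓ (n - m) m n (by omega) X Y dollar percent Δ hΔ Z
        (fun i j hj h' => (hZ j hj).2.1 i) (fun j hj => (hZ j hj).2.2)
      have hsum : z * m + 1 ≤ ∑ j ∈ Finset.range m, (Z j).length := by
        have hge : ∀ j ∈ Finset.range m, z + (if j = (t2 : ℕ) then 1 else 0) ≤ (Z j).length := by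
          intro j hj
          have hj' := Finset.mem_range.1 hj
          rw [(hZ j hj').1]
          split_ifs with he
          · subst he
            have : (fun q : Fin K => X q ⟨Δ q + (t2 : ℕ), hlt q t2 hj'⟩) =
                fun q : Fin K => X q (t1 q) := by
              funext q
              congr 1
              exact Fin.ext (htΔ q).symm
            rw [this]
            exact ht.ge
          · rcases hz (fun q : Fin K => ⟨Δ q + j, hlt q j hj'⟩) ⟨j, hj'⟩ with h | h
            · exact h.ge
            · exact le_trans (Nat.le_succ _) h.ge
        refine le_trans (le_of_eq ?_) (Finset.sum_le_sum hge)
        rw [Finset.sum_add_distrib, Finset.sum_ite_eq' (Finset.range m) (t2 : ℕ)]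
        simp [mul_comm]
      have hfin := BAG.le_lcsLen F _ hYF T (hFall T
        (fun i => (hTX i).trans (List.sublist_append_right _ _))
        (hTY.trans (List.sublist_append_left _ _)))
      omega
  · intro hno
    refine goalF _ (le_antisymm ?_ ?_)
    · have hs : ∑ j : Fin m, z = z * m := by simp [mul_comm]
      have := hup (fun j => z) ?_ hs.ge
      · omega
      · intro idx j
        rcases hz idx j with h | h
        · exact h.le
        · exact absurd h (hno (idx, j))
    · have := BAG.le_lcsLen F _ hYF (List.replicate N atSym) (hFall _
        (fun i => List.sublist_append_left _ _) (List.sublist_append_right _ _))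
      simpa using this
end
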